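/- arXiv:2310.01757 — 11 statements merged into one kernel-verified Lean document; each statement's English description precedes it below -/
import Mathlib

section
/- Let ℓ ≥ 2 and let α₁, …, α_ℓ ∈ ℝ and β₂, …, β_ℓ ∈ ℝ with β_j > 0 for 2 ≤ j ≤ ℓ. Then the ℓ×(ℓ−1) matrix product T_ℓ · T_{ℓ,ℓ−1} has rank exactly ℓ−1, even when the symmetric tridiagonal matrix T_ℓ is singular. -/
/-- The (m+1)×m tridiagonal matrix `T_{m+1,m}` produced by the symmetric Lanczos process,
with (1-based) diagonal entries `α 1, …, α m`, subdiagonal entries `β 2, …, β (m+1)` and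
superdiagonal entries `β 2, …, β m`. -/
def lanczosRect (m : ℕ) (α β : ℕ → ℝ) : Matrix (Fin (m + 1)) (Fin m) ℝ :=
  Matrix.of fun i j =>
    if (i : ℕ) = (j : ℕ) then α ((j : ℕ) + 1)
    else if (i : ℕ) = (j : ℕ) + 1 then β ((j : ℕ) + 2)
    else if (j : ℕ) = (i : ℕ) + 1 then β ((i : ℕ) + 2)
    else 0

/-- The square symmetric tridiagonal Lanczos matrix `T_m`, the top m×m block of `T_{m+1,m}`,
with (1-based) diagonal entries `α 1, …, α m` and off-diagonal entries `β 2, …, β m`. -/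
def lanczosSq (m : ℕ) (α β : ℕ → ℝ) : Matrix (Fin m) (Fin m) ℝ :=
  Matrix.of fun i j =>
    if (i : ℕ) = (j : ℕ) then α ((j : ℕ) + 1)
    else if (i : ℕ) = (j : ℕ) + 1 then β ((j : ℕ) + 2)
    else if (j : ℕ) = (i : ℕ) + 1 then β ((i : ℕ) + 2)
    else 0

theorem lanczosRect_inj (m : ℕ) (α β : ℕ → ℝ)
    (hβ : ∀ j, 2 ≤ j → j ≤ m + 1 → 0 < β j) (y : Fin m → ℝ)
    (h : (lanczosRect m α β).mulVec y = 0) : y = 0 := by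
  have key : ∀ k : ℕ, ∀ j : Fin m, m - (j : ℕ) ≤ k → y j = 0 := by
    intro k
    induction k with
    | zero => intro j hj; have := j.isLt; omega
    | succ k ih =>
      intro j hj
      have hr := congrFun h j.succ
      simp only [Matrix.mulVec, dotProduct, Pi.zero_apply] at hr
      rw [Finset.sum_eq_single j] at hr
      · have hb := hβ ((j : ℕ) + 2) (by omega) (by have := j.isLt; omega)
        have e : lanczosRect m α β j.succ j = β ((j : ℕ) + 2) := by
          simp [lanczosRect]
        rw [e] at hr
        exact (mul_eq_zero.mp hr).resolve_left hb.ne'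
      · intro i _ hij
        have hij' : (i : ℕ) ≠ j := fun e => hij (Fin.ext e)
        by_cases hlt : (j : ℕ) < i
        · rw [ih i (by omega), mul_zero]
        · have e : lanczosRect m α β j.succ i = 0 := by
            simp only [lanczosRect, Matrix.of_apply, Fin.val_succ]
            rw [if_neg (by omega), if_neg (by omega), if_neg (by omega)]
          rw [e, zero_mul]
      · simp
  funext j
  exact key m j (by omega)

/-- Paper: Theorem 4.2.  Let `ℓ = m + 1 ≥ 2`.  If the off-diagonal Lanczos entries
`β 2, …, β ℓ` are positive, then the ℓ×(ℓ−1) product `T_ℓ ⬝ T_{ℓ,ℓ−1}` has rank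
exactly `ℓ − 1 = m`, even when `T_ℓ` is singular. -/
theorem lanczos_TT_rank_sq (m : ℕ) (hm : 1 ≤ m) (α β : ℕ → ℝ)
    (hβ : ∀ j, 2 ≤ j → j ≤ m + 1 → 0 < β j) :
    (lanczosSq (m + 1) α β * lanczosRect m α β).rank = m := by
  have hinj : Function.Injective
      (lanczosSq (m + 1) α β * lanczosRect m α β).mulVecLin := by
    rw [injective_iff_map_eq_zero]
    intro y hy
    rw [Matrix.mulVecLin_apply, ← Matrix.mulVec_mulVec] at hy
    apply lanczosRect_inj m α β hβ
    have h2 : ((lanczosRect m α β).conjTranspose * lanczosRect m α β).mulVec y = 0 := by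
      rw [← Matrix.mulVec_mulVec]
      funext j
      have hr := congrFun hy j.castSucc
      rw [Pi.zero_apply] at hr ⊢
      rw [← hr]
      simp only [Matrix.mulVec, dotProduct]
      refine Finset.sum_congr rfl fun i _ => ?_
      congr 1
      simp only [Matrix.conjTranspose_apply, lanczosRect, lanczosSq, Matrix.of_apply,
        Fin.val_castSucc, star_trivial]
      split_ifs <;> first | rfl | omega | (congr 1; omega)
    exact (Matrix.conjTranspose_mul_self_mulVec_eq_zero _ _).mp h2
  rw [Matrix.rank, LinearMap.finrank_range_of_inj hinj]
  simp
end

section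
/- Let A be a real symmetric n×n matrix and b ∈ ℝⁿ. Then there exists a vector x in the Krylov subspace span{A^j b : 0 ≤ j < n} such that A(b − Ax) = 0, i.e., A²x = Ab. In particular, even when the system Ax = b is inconsistent, the minimum of ‖A(b − Ax)‖ over the full Krylov subspace generated by A and b equals zero. -/
open Polynomial in
/-- A symmetric real matrix satisfies `A = A² q(A)` for some polynomial `q`. -/
lemma exists_poly_sq_mul (n : ℕ) (A : Matrix (Fin n) (Fin n) ℝ) (hA : A.IsSymm) :
    ∃ q : ℝ[X], A * (A * aeval A q) = A := by
  have key : ∀ (k : ℕ) (M : Matrix (Fin n) (Fin n) ℝ), A ^ k * M = 0 → A * M = 0 := by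
    intro k
    induction k with
    | zero => intro M h; simp at h; simp [h]
    | succ k ih =>
      intro M h
      rw [pow_succ, mul_assoc] at h
      have h2 := ih _ h
      have hH : A.conjTranspose = A := by
        rw [Matrix.conjTranspose_eq_transpose_of_trivial]; exact hA
      rw [← Matrix.conjTranspose_mul_self_mul_eq_zero, hH, mul_assoc]
      exact h2
  obtain ⟨u, hu, hnd⟩ := Polynomial.exists_eq_pow_rootMultiplicity_mul_and_not_dvd A.charpoly
    A.charpoly_monic.ne_zero 0
  have h0 := A.aeval_self_charpoly
  rw [hu] at h0
  simp only [map_zero, sub_zero, map_mul, map_pow, aeval_X] at h0 hnd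
  have h1 := key _ _ h0
  have hc : IsCoprime (X : ℝ[X]) u := (Polynomial.irreducible_X.coprime_iff_not_dvd).2 hnd
  obtain ⟨a, c, hac⟩ := hc
  refine ⟨a, ?_⟩
  have h3 : X * (X * a) + X * u * c = (X : ℝ[X]) := by linear_combination X * hac
  have h4 := congrArg (aeval A) h3
  simpa [h1] using h4

/-- Paper: Theorem 4.5.  For a real symmetric `A` and any `b` (so `A x = b` may be
inconsistent), there is a vector `x` in the full Krylov subspace
`span {b, Ab, …, A^(n−1) b}` with `A (b − A x) = 0`, i.e. `A² x = A b`; in particular the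
minimum of `‖A (b − A x)‖` over the Krylov subspace is zero. -/
theorem krylov_Ar_eq_zero (n : ℕ) (A : Matrix (Fin n) (Fin n) ℝ) (hA : A.IsSymm)
    (b : Fin n → ℝ) :
    ∃ x ∈ Submodule.span ℝ {v : Fin n → ℝ | ∃ j < n, v = (A ^ j).mulVec b},
      A.mulVec (b - A.mulVec x) = 0 := by
  obtain ⟨q, hq⟩ := exists_poly_sq_mul n A hA
  rcases Nat.eq_zero_or_pos n with rfl | hn
  · exact ⟨0, Submodule.zero_mem _, Subsingleton.elim _ _⟩
  have hr : Polynomial.aeval A (q %ₘ A.charpoly) = Polynomial.aeval A q :=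
    Polynomial.aeval_modByMonic_eq_self_of_root A.aeval_self_charpoly
  have hd : (q %ₘ A.charpoly).natDegree < n := by
    have := Polynomial.natDegree_modByMonic_lt q A.charpoly_monic (by
      intro h
      have h2 := A.charpoly_natDegree_eq_dim
      rw [h] at h2
      simp at h2
      omega)
    simpa [A.charpoly_natDegree_eq_dim] using this
  refine ⟨(Polynomial.aeval A q).mulVec b, ?_, ?_⟩
  · rw [← hr, Polynomial.aeval_eq_sum_range' hd, Matrix.sum_mulVec]
    refine Submodule.sum_mem _ fun j hj => ?_
    rw [Matrix.smul_mulVec]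
    exact Submodule.smul_mem _ _ (Submodule.subset_span ⟨j, Finset.mem_range.1 hj, rfl⟩)
  · rw [Matrix.mulVec_sub, Matrix.mulVec_mulVec, Matrix.mulVec_mulVec, mul_assoc, hq, sub_self]
end

section
/- For all k < N, the conjugation coefficient satisfies β_k = ρ_{k+1}/ρ_k, i.e., −(p_kᵀAˢr_{k+1})·ρ_k = ρ_{k+1}·(p_kᵀAˢp_k). -/
open Matrix

/-- Powers of a real positive definite matrix are positive on nonzero vectors. -/
lemma pow_form_pos {n : ℕ} (A : Matrix (Fin n) (Fin n) ℝ) (hA : A.PosDef) (m : ℕ) :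
    ∀ v : Fin n → ℝ, v ≠ 0 → 0 < v ⬝ᵥ (A ^ m).mulVec v := by
  have hT : Aᵀ = A := by simpa [Matrix.IsSymm] using hA.isHermitian
  have hinj : ∀ v : Fin n → ℝ, v ≠ 0 → A.mulVec v ≠ 0 := by
    intro v hv h
    have := hA.dotProduct_mulVec_pos hv
    rw [h] at this
    simp at this
  induction m using Nat.twoStepInduction with
  | zero =>
    intro v hv
    simpa using dotProduct_star_self_pos_iff.2 hv
  | one =>
    intro v hv
    simpa using hA.dotProduct_mulVec_pos hv
  | more m ih _ =>
    intro v hv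
    have h := ih _ (hinj v hv)
    have e : v ⬝ᵥ (A ^ (m + 2)).mulVec v
        = A.mulVec v ⬝ᵥ (A ^ m).mulVec (A.mulVec v) := by
      have e1 : A ^ (m + 2) = A * (A ^ m * A) := by
        rw [← pow_succ, ← pow_succ']
      rw [e1, ← Matrix.mulVec_mulVec, Matrix.dotProduct_mulVec, ← Matrix.mulVec_transpose, hT,
        ← Matrix.mulVec_mulVec]
    rw [e]
    exact h

lemma pow_form_symm {n : ℕ} (A : Matrix (Fin n) (Fin n) ℝ) (hA : A.PosDef) (m : ℕ)
    (u v : Fin n → ℝ) : u ⬝ᵥ (A ^ m).mulVec v = v ⬝ᵥ (A ^ m).mulVec u := by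
  have hT : Aᵀ = A := by simpa [Matrix.IsSymm] using hA.isHermitian
  rw [Matrix.dotProduct_mulVec, ← Matrix.mulVec_transpose, Matrix.transpose_pow, hT,
    dotProduct_comm]

/-- Paper: Theorem 6.1 (β-formula).  Conjugate-direction iteration with Hessian `H = Aˢ`
and gradient `∇f(x) = −A^(s−1) (b − A x)` (s = 1, 2, 4 give CG, CR, cAr): for all `k < N`
the conjugation coefficient satisfies `β_k = ρ_{k+1} / ρ_k`, i.e.
`−(p_kᵀ Aˢ r_{k+1}) ρ_k = ρ_{k+1} (p_kᵀ Aˢ p_k)`. -/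
theorem conjdir_beta_formula (n s N : ℕ) (hs : 1 ≤ s)
    (A : Matrix (Fin n) (Fin n) ℝ) (hA : A.PosDef) (b : Fin n → ℝ)
    (x r p : ℕ → (Fin n → ℝ)) (ρ α β : ℕ → ℝ)
    (hx0 : x 0 = 0) (hr0 : r 0 = b) (hp0 : p 0 = b)
    (hρ : ∀ k, ρ k = r k ⬝ᵥ (A ^ (s - 1)).mulVec (r k))
    (hα : ∀ k, α k = ρ k / (p k ⬝ᵥ (A ^ s).mulVec (p k)))
    (hx : ∀ k, x (k + 1) = x k + α k • p k)
    (hr : ∀ k, r (k + 1) = r k - α k • A.mulVec (p k))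
    (hβ : ∀ k, β k = -(p k ⬝ᵥ (A ^ s).mulVec (r (k + 1))) / (p k ⬝ᵥ (A ^ s).mulVec (p k)))
    (hp : ∀ k, p (k + 1) = r (k + 1) + β k • p k)
    (hne : ∀ k ≤ N, r k ≠ 0) :
    ∀ k < N,
      β k = ρ (k + 1) / ρ k ∧
      -(p k ⬝ᵥ (A ^ s).mulVec (r (k + 1))) * ρ k = ρ (k + 1) * (p k ⬝ᵥ (A ^ s).mulVec (p k)) := by
  have symP := pow_form_symm A hA (s - 1)
  have symH := pow_form_symm A hA s
  have posP := pow_form_pos A hA (s - 1)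
  have posH := pow_form_pos A hA s
  have PA : ∀ u v : Fin n → ℝ,
      u ⬝ᵥ (A ^ (s - 1)).mulVec (A.mulVec v) = u ⬝ᵥ (A ^ s).mulVec v := by
    intro u v
    rw [Matrix.mulVec_mulVec, ← pow_succ, Nat.sub_add_cancel hs]
  generalize A ^ (s - 1) = P at *
  generalize A ^ s = H at *
  -- the positivity of the curvature follows from the invariant
  have key0 : ∀ k ≤ N, r k ⬝ᵥ P.mulVec (p k) = ρ k → 0 < p k ⬝ᵥ H.mulVec (p k) := by
    intro k hk h
    apply posH
    intro h0
    have := posP _ (hne k hk)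
    rw [h0, hρ] at h
    simp at h
    linarith
  have inv : ∀ k ≤ N, r k ⬝ᵥ P.mulVec (p k) = ρ k ∧
      r k ⬝ᵥ H.mulVec (p k) = p k ⬝ᵥ H.mulVec (p k) := by
    intro k
    induction k with
    | zero => intro _; rw [hρ, hr0, hp0]; exact ⟨rfl, rfl⟩
    | succ k ih =>
      intro hk
      obtain ⟨h1, h2⟩ := ih (by omega)
      have hpos := key0 k (by omega) h1
      have ha : α k * (p k ⬝ᵥ H.mulVec (p k)) = ρ k := by
        rw [hα]; field_simp
      have hb : β k * (p k ⬝ᵥ H.mulVec (p k)) = -(p k ⬝ᵥ H.mulVec (r (k + 1))) := by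
        rw [hβ]; field_simp
      have hz : r (k + 1) ⬝ᵥ P.mulVec (p k) = 0 := by
        rw [symP, hr, Matrix.mulVec_sub, Matrix.mulVec_smul, dotProduct_sub, dotProduct_smul, PA,
          symP, h1, smul_eq_mul, ha, sub_self]
      constructor
      · rw [hp, Matrix.mulVec_add, Matrix.mulVec_smul, dotProduct_add, dotProduct_smul, hz, hρ]
        simp
      · have hc : p k ⬝ᵥ H.mulVec (p (k + 1)) = 0 := by
          rw [hp, Matrix.mulVec_add, Matrix.mulVec_smul, dotProduct_add, dotProduct_smul,
            smul_eq_mul, hb]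
          ring
        have e : r (k + 1) = p (k + 1) - β k • p k := by rw [hp]; simp
        rw [e, sub_dotProduct, smul_dotProduct, hc]
        simp
  intro k hk
  obtain ⟨h1, h2⟩ := inv k hk.le
  have hpos := key0 k hk.le h1
  have hρpos : 0 < ρ k := by rw [hρ]; exact posP _ (hne k hk.le)
  have ha : α k * (p k ⬝ᵥ H.mulVec (p k)) = ρ k := by
    rw [hα]; field_simp
  have ho : r k ⬝ᵥ P.mulVec (r (k + 1)) = 0 := by
    rw [hr, Matrix.mulVec_sub, Matrix.mulVec_smul, dotProduct_sub, dotProduct_smul, PA, h2,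
      smul_eq_mul, ha, hρ, sub_self]
  have hn : ρ (k + 1) = -(α k * (p k ⬝ᵥ H.mulVec (r (k + 1)))) := by
    have e : r (k + 1) ⬝ᵥ P.mulVec (r (k + 1))
        = r (k + 1) ⬝ᵥ P.mulVec (r k - α k • A.mulVec (p k)) := by rw [← hr]
    rw [hρ, e, Matrix.mulVec_sub, Matrix.mulVec_smul, dotProduct_sub, dotProduct_smul, PA,
      symP, ho, symH, smul_eq_mul, zero_sub]
  have main : -(p k ⬝ᵥ H.mulVec (r (k + 1))) * ρ k
      = ρ (k + 1) * (p k ⬝ᵥ H.mulVec (p k)) := by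
    rw [hn, ← ha]; ring
  refine ⟨?_, main⟩
  rw [hβ, div_eq_div_iff hpos.ne' hρpos.ne', main]
end

section
/- For all i, j ≤ ℓ with i ≠ j, the cAr directions are A⁴-conjugate: p_iᵀA⁴p_j = 0. -/
open Matrix

/-- Conjugacy of CG directions for an abstract inner product `B` and `B`-self-adjoint `T`. -/
theorem cg_aux {V : Type*} [AddCommGroup V] [Module ℝ V] (B : V →ₗ[ℝ] V →ₗ[ℝ] ℝ) (T : V →ₗ[ℝ] V)
    (hs : ∀ u v, B u v = B v u) (hT : ∀ u v, B (T u) v = B u (T v))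
    (hpos : ∀ u, u ≠ 0 → 0 < B u u) (hTpos : ∀ u, u ≠ 0 → 0 < B u (T u))
    (r p : ℕ → V) (α β : ℕ → ℝ) (ℓ : ℕ) (h0 : p 0 = r 0)
    (hα : ∀ k, α k = B (r k) (r k) / B (p k) (T (p k)))
    (hr : ∀ k, r (k + 1) = r k - α k • T (p k))
    (hβ : ∀ k, β k = B (r (k + 1)) (r (k + 1)) / B (r k) (r k))
    (hp : ∀ k, p (k + 1) = r (k + 1) + β k • p k)
    (hne : ∀ k < ℓ, r k ≠ 0) (k : ℕ) (hk : k ≤ ℓ) :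
    B (r k) (p k) = B (r k) (r k) ∧ ∀ i < k, B (r k) (p i) = 0 ∧ B (p k) (T (p i)) = 0 ∧
      B (r k) (r i) = 0 ∧ α i ≠ 0 := by
  induction k with
  | zero => exact ⟨by rw [h0], fun i hi => absurd hi (Nat.not_lt_zero i)⟩
  | succ k ih =>
    obtain ⟨h1, h2⟩ := ih (by omega)
    have hρ : 0 < B (r k) (r k) := hpos _ (hne k (by omega))
    have hpk : p k ≠ 0 := by
      intro h
      rw [h, map_zero] at h1
      exact hρ.ne h1
    have hC := hTpos _ hpk
    have hαk : α k ≠ 0 := by rw [hα]; exact (div_pos hρ hC).ne'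
    have hαC : α k * B (p k) (T (p k)) = B (r k) (r k) := by
      rw [hα]; field_simp
    have hβρ : β k * B (r k) (r k) = B (r (k + 1)) (r (k + 1)) := by
      rw [hβ]; field_simp
    have ha : ∀ i < k + 1, α i ≠ 0 := by
      intro i hi
      rcases Nat.lt_succ_iff_lt_or_eq.mp hi with h | rfl
      · exact (h2 i h).2.2.2
      · exact hαk
    have hb : ∀ i < k + 1, B (r (k + 1)) (p i) = 0 := by
      intro i hi
      have e : B (r (k + 1)) (p i) = B (r k) (p i) - α k * B (p k) (T (p i)) := by
        rw [hr]; simp [hT]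
      rw [e]
      rcases Nat.lt_succ_iff_lt_or_eq.mp hi with h | rfl
      · rw [(h2 i h).1, (h2 i h).2.1]; ring
      · rw [h1, hαC]; ring
    have hc : ∀ i < k + 1, B (r (k + 1)) (r i) = 0 := by
      intro i hi
      cases i with
      | zero => rw [← h0]; exact hb 0 hi
      | succ i =>
        have e : r (i + 1) = p (i + 1) - β i • p i := by rw [hp]; abel
        rw [e, map_sub, map_smul, hb _ hi, hb i (by omega)]; simp
    refine ⟨?_, fun i hi => ⟨hb i hi, ?_, hc i hi, ha i hi⟩⟩
    · rw [hp k, map_add, map_smul, hb k (by omega)]; simp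
    · have e : B (p (k + 1)) (T (p i)) = B (r (k + 1)) (T (p i)) + β k * B (p k) (T (p i)) := by
        rw [hp]; simp
      have e2 : α i * B (r (k + 1)) (T (p i)) = B (r (k + 1)) (r i) - B (r (k + 1)) (r (i + 1)) := by
        rw [hr i]; simp
      apply (mul_eq_zero.mp ?_).resolve_left (ha i hi)
      rw [e, mul_add, e2, hc i hi]
      rcases Nat.lt_succ_iff_lt_or_eq.mp hi with h | rfl
      · rw [hc (i + 1) (by omega), (h2 i h).2.1]; ring
      · linear_combination β i * hαC + hβρ

/-- Paper: Theorem 6.3(a).  cAr iteration for SPD `A` (with `ρ_k = r_kᵀA³r_k`,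
`α_k = ρ_k/‖A²p_k‖²`, `β_k = ρ_{k+1}/ρ_k`), terminating at step `ℓ ≤ n`
(`r_k ≠ 0` for `k < ℓ` and `r_ℓ = 0`):  the directions are `A⁴`-conjugate: `p_iᵀ A⁴ p_j = 0` for `i ≠ j`. -/
theorem car_directions_A4_conjugate (n ℓ : ℕ) (hℓn : ℓ ≤ n)
    (A : Matrix (Fin n) (Fin n) ℝ) (hA : A.PosDef) (b : Fin n → ℝ)
    (x r p : ℕ → (Fin n → ℝ)) (ρ α β : ℕ → ℝ)
    (hx0 : x 0 = 0) (hr0 : r 0 = b) (hp0 : p 0 = b)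
    (hρ : ∀ k, ρ k = r k ⬝ᵥ (A ^ 3).mulVec (r k))
    (hα : ∀ k, α k = ρ k / ((A ^ 2).mulVec (p k) ⬝ᵥ (A ^ 2).mulVec (p k)))
    (hx : ∀ k, x (k + 1) = x k + α k • p k)
    (hr : ∀ k, r (k + 1) = r k - α k • A.mulVec (p k))
    (hβ : ∀ k, β k = ρ (k + 1) / ρ k)
    (hp : ∀ k, p (k + 1) = r (k + 1) + β k • p k)
    (hne : ∀ k < ℓ, r k ≠ 0) (hfin : r ℓ = 0) :
    ∀ i ≤ ℓ, ∀ j ≤ ℓ, i ≠ j → p i ⬝ᵥ (A ^ 4).mulVec (p j) = 0 := by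
  have hAt : Aᵀ = A := by simpa using hA.1.eq
  have hpow : ∀ m : ℕ, (A ^ m)ᵀ = A ^ m := fun m => by rw [transpose_pow, hAt]
  have hsym : ∀ (m : ℕ) (u v : Fin n → ℝ), u ⬝ᵥ (A ^ m) *ᵥ v = (A ^ m) *ᵥ u ⬝ᵥ v := by
    intro m u v
    rw [dotProduct_mulVec, ← mulVec_transpose, hpow]
  have hB : ∀ u v, Matrix.toLinearMap₂' ℝ (A ^ 3) u v = u ⬝ᵥ (A ^ 3) *ᵥ v := fun u v => by
    rw [Matrix.toLinearMap₂'_apply']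
  have hBT : ∀ u v, Matrix.toLinearMap₂' ℝ (A ^ 3) u (A.mulVecLin v) = u ⬝ᵥ (A ^ 4) *ᵥ v :=
    fun u v => by rw [hB, mulVecLin_apply, mulVec_mulVec, ← pow_succ]
  have h4 : ∀ u v, u ⬝ᵥ (A ^ 4) *ᵥ v = (A ^ 2) *ᵥ u ⬝ᵥ (A ^ 2) *ᵥ v := fun u v => by
    rw [← hsym, mulVec_mulVec, ← pow_add]
  have hinj : ∀ u, u ≠ 0 → A *ᵥ u ≠ 0 := by
    intro u hu h
    have := hA.dotProduct_mulVec_pos hu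
    rw [h] at this
    simp at this
  have key := cg_aux (Matrix.toLinearMap₂' ℝ (A ^ 3)) A.mulVecLin
    (fun u v => by rw [hB, hB, hsym, dotProduct_comm])
    (fun u v => by
      rw [hBT, hB, mulVecLin_apply, hsym, mulVec_mulVec, ← pow_succ, hsym])
    (fun u hu => by
      have := hA.dotProduct_mulVec_pos (hinj u hu)
      have e : u ⬝ᵥ (A ^ 3) *ᵥ u = A *ᵥ u ⬝ᵥ A *ᵥ (A *ᵥ u) := by
        have h := hsym 1 u ((A ^ 2) *ᵥ u)
        rw [pow_one, mulVec_mulVec, ← pow_succ'] at h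
        rw [h, mulVec_mulVec, ← pow_two]
      rw [hB, e]
      simpa using this)
    (fun u hu => by
      rw [hBT, h4]
      have h : (A ^ 2) *ᵥ u ≠ 0 := by
        rw [pow_two, ← mulVec_mulVec]; exact hinj _ (hinj _ hu)
      have := dotProduct_star_self_pos_iff.mpr h
      simpa using this)
    r p α β ℓ (by rw [hp0, hr0])
    (fun k => by rw [hα, hρ, hB, hBT, h4]) (fun k => by rw [hr, mulVecLin_apply])
    (fun k => by rw [hβ, hρ, hρ, hB, hB]) hp hne
  intro i hi j hj hij
  rcases lt_or_gt_of_ne hij with h | h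
  · have := ((key j hj).2 i h).2.1
    rw [hBT] at this
    rw [hsym, dotProduct_comm, this]
  · have := ((key i hi).2 j h).2.1
    rwa [hBT] at this
end

section
/- For all i, j ≤ ℓ with i > j, the cAr iterates satisfy r_iᵀA³p_j = 0 (a later residual is A³-orthogonal to every earlier direction). -/
open Matrix

lemma car_abs {E : Type*} [AddCommGroup E] [Module ℝ E] (ℓ : ℕ)
    (B : E →ₗ[ℝ] E →ₗ[ℝ] ℝ) (T : E → E)
    (hT : ∀ u v, B (T u) v = B u (T v)) (hs : ∀ u v, B u v = B v u)
    (hpos : ∀ u, u ≠ 0 → B u u ≠ 0) (hpos4 : ∀ u, u ≠ 0 → B u (T u) ≠ 0)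
    (r p : ℕ → E) (ρ α β : ℕ → ℝ)
    (h0 : p 0 = r 0)
    (hρ : ∀ k, ρ k = B (r k) (r k))
    (hα : ∀ k, α k = ρ k / B (p k) (T (p k)))
    (hr : ∀ k, r (k + 1) = r k - α k • T (p k))
    (hβ : ∀ k, β k = ρ (k + 1) / ρ k)
    (hp : ∀ k, p (k + 1) = r (k + 1) + β k • p k)
    (hne : ∀ k < ℓ, r k ≠ 0) :
    ∀ k ≤ ℓ, (∀ j < k, B (r k) (p j) = 0) ∧ (∀ j < k, B (p k) (T (p j)) = 0) ∧
      B (r k) (p k) = ρ k ∧ (∀ j < k, α j ≠ 0) := by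
  intro k
  induction k with
  | zero => intro _; simp [h0, hρ]
  | succ k ih =>
    intro hk
    obtain ⟨ha, hb, hc, he⟩ := ih (by omega)
    have hρk : ρ k ≠ 0 := by rw [hρ]; exact hpos _ (hne k (by omega))
    have hpk : p k ≠ 0 := by
      intro h; rw [h] at hc; simp at hc; exact hρk hc.symm
    have hd := hpos4 _ hpk
    have hαk : α k ≠ 0 := by rw [hα]; exact div_ne_zero hρk hd
    have he' : ∀ j < k + 1, α j ≠ 0 := by
      intro j hj
      rcases Nat.lt_succ_iff_lt_or_eq.mp hj with h | h
      · exact he j h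
      · rw [h]; exact hαk
    have ha' : ∀ j < k + 1, B (r (k+1)) (p j) = 0 := by
      intro j hj
      rw [hr]
      simp only [map_sub, map_smul, LinearMap.sub_apply, LinearMap.smul_apply, smul_eq_mul, hT]
      rcases Nat.lt_succ_iff_lt_or_eq.mp hj with h | h
      · rw [ha j h, hb j h]; simp
      · rw [h, hc, hα]; field_simp; simp
    have hrr : ∀ j < k + 1, B (r (k+1)) (r j) = 0 := by
      intro j hj
      cases j with
      | zero => rw [← h0]; exact ha' 0 hj
      | succ j =>
        have h1 := ha' (j+1) hj
        rw [hp] at h1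
        simpa [ha' j (by omega)] using h1
    have hc' : B (r (k+1)) (p (k+1)) = ρ (k+1) := by
      rw [hp]; simp [ha' k (by omega), hρ]
    refine ⟨ha', ?_, hc', he'⟩
    intro j hj
    have key : α j * B (r (k+1)) (T (p j)) = B (r (k+1)) (r j) - B (r (k+1)) (r (j+1)) := by
      conv_rhs => rw [hr j]
      simp
    rw [hrr j hj] at key
    have hαj := he' j hj
    apply mul_left_cancel₀ hαj
    rw [hp k]
    simp only [map_add, map_smul, LinearMap.add_apply, LinearMap.smul_apply, smul_eq_mul, mul_add]
    rw [key]
    rcases Nat.lt_succ_iff_lt_or_eq.mp hj with h | h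
    · rw [hrr (j+1) (by omega), hb j h]; simp
    · subst h
      rw [← hρ, hβ, hα]
      field_simp
      simp

/-- Paper: Theorem 6.3(b).  cAr iteration for SPD `A` (with `ρ_k = r_kᵀA³r_k`,
`α_k = ρ_k/‖A²p_k‖²`, `β_k = ρ_{k+1}/ρ_k`), terminating at step `ℓ ≤ n`
(`r_k ≠ 0` for `k < ℓ` and `r_ℓ = 0`):  a later residual is `A³`-orthogonal to every earlier direction: `r_iᵀ A³ p_j = 0` for `i > j`. -/
theorem car_residual_A3_orth_directions (n ℓ : ℕ) (hℓn : ℓ ≤ n)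
    (A : Matrix (Fin n) (Fin n) ℝ) (hA : A.PosDef) (b : Fin n → ℝ)
    (x r p : ℕ → (Fin n → ℝ)) (ρ α β : ℕ → ℝ)
    (hx0 : x 0 = 0) (hr0 : r 0 = b) (hp0 : p 0 = b)
    (hρ : ∀ k, ρ k = r k ⬝ᵥ (A ^ 3).mulVec (r k))
    (hα : ∀ k, α k = ρ k / ((A ^ 2).mulVec (p k) ⬝ᵥ (A ^ 2).mulVec (p k)))
    (hx : ∀ k, x (k + 1) = x k + α k • p k)
    (hr : ∀ k, r (k + 1) = r k - α k • A.mulVec (p k))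
    (hβ : ∀ k, β k = ρ (k + 1) / ρ k)
    (hp : ∀ k, p (k + 1) = r (k + 1) + β k • p k)
    (hne : ∀ k < ℓ, r k ≠ 0) (hfin : r ℓ = 0) :
    ∀ i ≤ ℓ, ∀ j ≤ ℓ, j < i → r i ⬝ᵥ (A ^ 3).mulVec (p j) = 0 := by
  have hH : Aᵀ = A := by
    have h : A.IsSymm := by simpa using hA.isHermitian
    exact h
  have hdet : IsUnit A := hA.isUnit
  have hsym : ∀ (m : ℕ) (u v : Fin n → ℝ), (A ^ m) *ᵥ u ⬝ᵥ v = u ⬝ᵥ (A ^ m) *ᵥ v := by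
    intro m u v
    rw [dotProduct_mulVec, ← mulVec_transpose, transpose_pow, hH]
  have hinj : ∀ (m : ℕ) (u : Fin n → ℝ), u ≠ 0 → (A ^ m) *ᵥ u ≠ 0 := by
    intro m u hu h
    apply hu
    exact (mulVec_injective_iff_isUnit.mpr (hdet.pow m)) (by simpa using h)
  have h3 : ∀ u : Fin n → ℝ, u ⬝ᵥ (A ^ 3) *ᵥ u = (A *ᵥ u) ⬝ᵥ A *ᵥ (A *ᵥ u) := by
    intro u
    have := hsym 1 u ((A ^ 2) *ᵥ u)
    rw [pow_one] at this
    rw [mulVec_mulVec, ← sq, this, mulVec_mulVec, ← pow_succ']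
  have h4 : ∀ u : Fin n → ℝ, u ⬝ᵥ (A ^ 3) *ᵥ (A *ᵥ u) = (A ^ 2) *ᵥ u ⬝ᵥ (A ^ 2) *ᵥ u := by
    intro u
    rw [hsym, mulVec_mulVec, mulVec_mulVec, ← pow_succ, ← pow_add]
  have hB : ∀ u v : Fin n → ℝ, Matrix.toLinearMap₂' ℝ (A ^ 3) u v = u ⬝ᵥ (A ^ 3) *ᵥ v :=
    fun u v => Matrix.toLinearMap₂'_apply' _ _ _
  have main := car_abs ℓ (Matrix.toLinearMap₂' ℝ (A ^ 3)) (fun u => A *ᵥ u)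
    (by
      intro u v
      have := hsym 1 u ((A ^ 3) *ᵥ v)
      rw [pow_one] at this
      rw [hB, hB, this, mulVec_mulVec, mulVec_mulVec, ← pow_succ, ← pow_succ'])
    (by intro u v; rw [hB, hB, ← hsym, dotProduct_comm])
    (by
      intro u hu
      rw [hB, h3]
      have h := hinj 1 u hu
      rw [pow_one] at h
      have := hA.dotProduct_mulVec_pos h
      rw [star_trivial] at this
      exact this.ne')
    (by
      intro u hu
      rw [hB, h4]
      intro h
      exact hinj 2 u hu (dotProduct_self_eq_zero.mp h))
    r p ρ α β (hp0.trans hr0.symm) (by intro k; rw [hB, hρ])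
    (by intro k; rw [hB, h4, hα]) hr hβ hp hne
  intro i hi j _ hji
  rw [← hB]
  exact (main i hi).1 j hji
end

section
/- For all i, j ≤ ℓ, the cAr directions satisfy p_iᵀA²p_j ≥ 0. -/
open Matrix

/-- The bilinear form `u ↦ v ↦ uᵀ A^s v`. -/
def carB {n : ℕ} (A : Matrix (Fin n) (Fin n) ℝ) (s : ℕ) (u v : Fin n → ℝ) : ℝ :=
  u ⬝ᵥ (A ^ s).mulVec v

section
variable {n : ℕ} (A : Matrix (Fin n) (Fin n) ℝ)

lemma carB_add_left (s : ℕ) (u v w : Fin n → ℝ) :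
    carB A s (u + v) w = carB A s u w + carB A s v w := by
  simp [carB, add_dotProduct]

lemma carB_sub_left (s : ℕ) (u v w : Fin n → ℝ) :
    carB A s (u - v) w = carB A s u w - carB A s v w := by
  simp [carB, sub_dotProduct]

lemma carB_smul_left (s : ℕ) (c : ℝ) (u w : Fin n → ℝ) :
    carB A s (c • u) w = c * carB A s u w := by
  simp [carB, smul_dotProduct]

lemma carB_symm (hA : A.PosDef) (s : ℕ) (u v : Fin n → ℝ) :
    carB A s u v = carB A s v u := by
  have hT : (A ^ s)ᵀ = A ^ s := by
    have h := hA.isHermitian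
    have h2 : Aᵀ = A := by
      have := h.eq
      rwa [conjTranspose_eq_transpose_of_trivial] at this
    rw [transpose_pow, h2]
  unfold carB
  rw [dotProduct_mulVec, ← mulVec_transpose, hT, dotProduct_comm]

lemma carB_mul_right (s : ℕ) (u v : Fin n → ℝ) :
    carB A s u (A.mulVec v) = carB A (s + 1) u v := by
  unfold carB
  rw [mulVec_mulVec, pow_succ]

lemma carB_mul_left (hA : A.PosDef) (s : ℕ) (u v : Fin n → ℝ) :
    carB A s (A.mulVec u) v = carB A (s + 1) u v := by
  rw [carB_symm A hA, carB_mul_right, carB_symm A hA]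

lemma carB_one_pos (hA : A.PosDef) (u : Fin n → ℝ) (hu : u ≠ 0) : 0 < carB A 1 u u := by
  have := hA.dotProduct_mulVec_pos hu
  simpa [carB] using this

lemma carB_three_pos (hA : A.PosDef) (u : Fin n → ℝ) (hu : u ≠ 0) : 0 < carB A 3 u u := by
  have h1 : A.mulVec u ≠ 0 := by
    intro h
    have := carB_one_pos A hA u hu
    simp [carB, h] at this
  have := carB_one_pos A hA _ h1
  rwa [carB_mul_left A hA, carB_mul_right] at this

lemma carB_four (hA : A.PosDef) (u : Fin n → ℝ) :
    (A ^ 2).mulVec u ⬝ᵥ (A ^ 2).mulVec u = carB A 4 u u := by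
  have h : (A ^ 2).mulVec u ⬝ᵥ (A ^ 2).mulVec u = carB A 2 ((A ^ 2).mulVec u) u := rfl
  rw [h, pow_two, ← mulVec_mulVec, carB_mul_left A hA, carB_mul_left A hA]

lemma carB_four_pos (hA : A.PosDef) (u : Fin n → ℝ) (hu : u ≠ 0) : 0 < carB A 4 u u := by
  have h3 := carB_three_pos A hA u hu
  rw [← carB_four A hA]
  have hne : (A ^ 2).mulVec u ≠ 0 := by
    intro h
    rw [carB_symm A hA, show (3 : ℕ) = 2 + 1 from rfl, ← carB_mul_left A hA] at h3
    simp [carB, h] at h3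
  have h0 := dotProduct_self_star_nonneg ((A ^ 2).mulVec u)
  have h1 : (A ^ 2).mulVec u ⬝ᵥ (A ^ 2).mulVec u ≠ 0 := by
    rwa [Ne, dotProduct_self_eq_zero]
  exact lt_of_le_of_ne (by simpa using h0) h1.symm

end

/-- Paper: Theorem 6.3(g).  cAr iteration for SPD `A` (with `ρ_k = r_kᵀA³r_k`,
`α_k = ρ_k/‖A²p_k‖²`, `β_k = ρ_{k+1}/ρ_k`), terminating at step `ℓ ≤ n`
(`r_k ≠ 0` for `k < ℓ` and `r_ℓ = 0`):  the directions satisfy `p_iᵀ A² p_j ≥ 0`. -/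
theorem car_pA2p_nonneg (n ℓ : ℕ) (hℓn : ℓ ≤ n)
    (A : Matrix (Fin n) (Fin n) ℝ) (hA : A.PosDef) (b : Fin n → ℝ)
    (x r p : ℕ → (Fin n → ℝ)) (ρ α β : ℕ → ℝ)
    (hx0 : x 0 = 0) (hr0 : r 0 = b) (hp0 : p 0 = b)
    (hρ : ∀ k, ρ k = r k ⬝ᵥ (A ^ 3).mulVec (r k))
    (hα : ∀ k, α k = ρ k / ((A ^ 2).mulVec (p k) ⬝ᵥ (A ^ 2).mulVec (p k)))
    (hx : ∀ k, x (k + 1) = x k + α k • p k)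
    (hr : ∀ k, r (k + 1) = r k - α k • A.mulVec (p k))
    (hβ : ∀ k, β k = ρ (k + 1) / ρ k)
    (hp : ∀ k, p (k + 1) = r (k + 1) + β k • p k)
    (hne : ∀ k < ℓ, r k ≠ 0) (hfin : r ℓ = 0) :
    ∀ i ≤ ℓ, ∀ j ≤ ℓ, 0 ≤ p i ⬝ᵥ (A ^ 2).mulVec (p j) := by
  have sym := carB_symm A hA
  have hρ' : ∀ k, ρ k = carB A 3 (r k) (r k) := hρ
  have hα' : ∀ k, α k = ρ k / carB A 4 (p k) (p k) := fun k => by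
    rw [hα, carB_four A hA]
  have ρpos : ∀ k < ℓ, 0 < ρ k := fun k hk => by
    rw [hρ']; exact carB_three_pos A hA _ (hne k hk)
  have ρnn : ∀ k ≤ ℓ, 0 ≤ ρ k := fun k hk => by
    rcases hk.lt_or_eq with h | h
    · exact (ρpos k h).le
    · rw [hρ', h, hfin]; simp [carB]
  have βnn : ∀ k < ℓ, 0 ≤ β k := fun k hk => by
    rw [hβ]; exact div_nonneg (ρnn _ hk) (ρpos k hk).le
  have rl : ∀ s k v, carB A s (r (k + 1)) v
      = carB A s (r k) v - α k * carB A (s + 1) (p k) v := fun s k v => by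
    rw [hr, carB_sub_left, carB_smul_left, carB_mul_left A hA]
  have pl : ∀ s k v, carB A s (p (k + 1)) v
      = carB A s (r (k + 1)) v + β k * carB A s (p k) v := fun s k v => by
    rw [hp, carB_add_left, carB_smul_left]
  have main : ∀ k ≤ ℓ, ∀ i < k, carB A 3 (p i) (r k) = 0 ∧ carB A 4 (p i) (p k) = 0 ∧
      carB A 3 (r i) (r k) = 0 ∧ 0 < α i := by
    intro k
    induction k with
    | zero => intro _ i hi; omega
    | succ k ih =>
      intro hk
      have hkl : k < ℓ := hk
      have ih := ih hkl.le
      have e1 : carB A 3 (p k) (r k) = ρ k := by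
        cases k with
        | zero => rw [hρ', hp0, hr0]
        | succ m => rw [pl, (ih m (by omega)).1, hρ']; ring
      have hpk : p k ≠ 0 := by
        intro h
        have := ρpos k hkl
        rw [← e1, h] at this
        simp [carB] at this
      have h4 := carB_four_pos A hA _ hpk
      have hρk := ρpos k hkl
      have αk : 0 < α k := by rw [hα']; exact div_pos hρk h4
      have αall : ∀ i < k + 1, 0 < α i := fun i hi => by
        rcases (Nat.lt_succ_iff.1 hi).lt_or_eq with h | h
        · exact (ih i h).2.2.2
        · rwa [h]
      have c1 : ∀ i < k + 1, carB A 3 (p i) (r (k + 1)) = 0 := fun i hi => by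
        rw [sym, rl, sym 3, sym (3 + 1)]
        rcases (Nat.lt_succ_iff.1 hi).lt_or_eq with h | h
        · rw [(ih i h).1, (ih i h).2.1]; ring
        · subst h
          rw [e1, hα']; field_simp; ring
      have c2 : ∀ i < k + 1, carB A 3 (r i) (r (k + 1)) = 0 := fun i hi => by
        cases i with
        | zero => rw [hr0, ← hp0]; exact c1 0 hi
        | succ m =>
          have h := pl 3 m (r (k + 1))
          rw [c1 _ hi, c1 m (by omega)] at h
          linarith
      have c3 : ∀ i < k + 1, carB A 4 (p i) (p (k + 1)) = 0 := fun i hi => by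
        have h := rl 3 i (r (k + 1))
        rw [c2 i hi] at h
        have hai := αall i hi
        rw [sym, pl, sym 4 (r (k + 1)), sym 4 (p k)]
        rcases (Nat.lt_succ_iff.1 hi).lt_or_eq with h' | h'
        · rw [c2 (i + 1) (by omega)] at h
          have : carB A 4 (p i) (r (k + 1)) = 0 := by
            have h5 : α i * carB A 4 (p i) (r (k + 1)) = 0 := by
              linarith
            exact (mul_eq_zero.1 h5).resolve_left hai.ne'
          rw [this, (ih i h').2.1]; ring
        · subst h'
          rw [← hρ'] at h
          have h6 : α i * carB A 4 (p i) (p i) = ρ i := by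
            rw [hα']; field_simp
          have h7 : α i * carB A 4 (p i) (r (i + 1)) = - ρ (i + 1) := by
            linarith
          have h8 : β i * ρ i = ρ (i + 1) := by
            rw [hβ]; field_simp
          have h9 : α i * (carB A 4 (p i) (r (i + 1)) + β i * carB A 4 (p i) (p i)) = 0 := by
            linear_combination h7 + β i * h6 + h8
          exact (mul_eq_zero.1 h9).resolve_left hai.ne'
      exact fun i hi => ⟨c1 i hi, c3 i hi, c2 i hi, αall i hi⟩
  have αpos : ∀ i < ℓ, 0 < α i := fun i hi => (main ℓ le_rfl i hi).2.2.2
  have rr : ∀ i ≤ ℓ, ∀ j ≤ ℓ, 0 ≤ carB A 3 (r i) (r j) := by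
    intro i hi j hj
    rcases lt_trichotomy i j with h | h | h
    · rw [(main j hj i h).2.2.1]
    · subst h; rw [← hρ']; exact ρnn i hi
    · rw [sym, (main i hi j h).2.2.1]
  have pr : ∀ m ≤ ℓ, ∀ i ≤ ℓ, 0 ≤ carB A 3 (p m) (r i) := by
    intro m
    induction m with
    | zero => intro hm i hi; rw [hp0, ← hr0]; exact rr 0 hm i hi
    | succ m ih =>
      intro hm i hi
      rw [pl]
      exact add_nonneg (rr _ hm i hi) (mul_nonneg (βnn m hm) (ih (by omega) i hi))
  have rr2 : ∀ d j, j + d = ℓ → ∀ i ≤ ℓ, 0 ≤ carB A 2 (r j) (r i) := by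
    intro d
    induction d with
    | zero =>
      intro j hj i hi
      have : j = ℓ := hj
      rw [this, hfin]; simp [carB]
    | succ d ih =>
      intro j hj i hi
      have h1 := ih (j + 1) (by omega) i hi
      rw [rl] at h1
      have h2 := mul_nonneg (αpos j (by omega)).le (pr j (by omega) i hi)
      linarith
  have pr2 : ∀ m ≤ ℓ, ∀ i ≤ ℓ, 0 ≤ carB A 2 (p m) (r i) := by
    intro m
    induction m with
    | zero => intro hm i hi; rw [hp0, ← hr0]; exact rr2 ℓ 0 (by omega) i hi
    | succ m ih =>
      intro hm i hi
      rw [pl]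
      exact add_nonneg (rr2 (ℓ - (m + 1)) _ (by omega) i hi)
        (mul_nonneg (βnn m hm) (ih (by omega) i hi))
  intro i
  induction i with
  | zero =>
    intro hi j hj
    change 0 ≤ carB A 2 (p 0) (p j)
    rw [sym, hp0, ← hr0]; exact pr2 j hj 0 hi
  | succ m ih =>
    intro hi j hj
    change 0 ≤ carB A 2 (p (m + 1)) (p j)
    rw [pl, sym 2 (r (m + 1))]
    exact add_nonneg (pr2 j hj _ hi) (mul_nonneg (βnn m hi) (ih (by omega) j hj))
end

section
/- For all i, j ≤ ℓ, the cAr directions satisfy p_iᵀAp_j ≥ 0. -/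
open Matrix

theorem car_abstract {V : Type*} [AddCommGroup V] [Module ℝ V] (T : V → V)
    (B : ℕ → V →ₗ[ℝ] V →ₗ[ℝ] ℝ)
    (symm : ∀ m u v, B m u v = B m v u)
    (shift : ∀ m u v, B m (T u) v = B (m + 1) u v)
    (pos : ∀ m u, u ≠ 0 → 0 < B m u u)
    (ℓ : ℕ) (r p : ℕ → V) (ρ α β : ℕ → ℝ) (h0 : p 0 = r 0)
    (hρ : ∀ k, ρ k = B 3 (r k) (r k))
    (hα : ∀ k, α k = ρ k / B 4 (p k) (p k))
    (hr : ∀ k, r (k + 1) = r k - α k • T (p k))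
    (hβ : ∀ k, β k = ρ (k + 1) / ρ k)
    (hp : ∀ k, p (k + 1) = r (k + 1) + β k • p k)
    (hne : ∀ k < ℓ, r k ≠ 0) (hfin : r ℓ = 0) :
    ∀ i ≤ ℓ, ∀ j ≤ ℓ, 0 ≤ B 1 (p i) (p j) := by
  have nn : ∀ m u, 0 ≤ B m u u := by
    intro m u
    by_cases h : u = 0
    · simp [h]
    · exact (pos m u h).le
  have ρnn : ∀ k, 0 ≤ ρ k := fun k => by rw [hρ]; exact nn _ _
  have αnn : ∀ k, 0 ≤ α k := fun k => by rw [hα]; exact div_nonneg (ρnn k) (nn _ _)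
  have βnn : ∀ k, 0 ≤ β k := fun k => by rw [hβ]; exact div_nonneg (ρnn _) (ρnn k)
  have key : ∀ k, k ≤ ℓ → ∀ i < k, B 3 (r k) (p i) = 0 ∧ B 4 (p k) (p i) = 0 := by
    intro k
    induction k using Nat.strong_induction_on with
    | _ k IH =>
    intro hk
    -- ρ k = r_k A³ p_k for smaller indices
    have hρp : ∀ i < k, B 3 (r i) (p i) = ρ i := by
      intro i hi
      cases i with
      | zero => rw [h0, hρ]
      | succ i =>
        rw [hp, map_add, map_smul, (IH (i+1) hi (by omega) i (by omega)).1, hρ]; simp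
    have hρpos : ∀ i < k, 0 < ρ i := fun i hi => by
      rw [hρ]; exact pos _ _ (hne i (by omega))
    have hppos : ∀ i < k, 0 < B 4 (p i) (p i) := fun i hi => pos _ _ (by
      intro h
      have := hρp i hi
      rw [h, map_zero] at this
      exact absurd this (hρpos i hi).ne)
    have hαm : ∀ i < k, α i * B 4 (p i) (p i) = ρ i := fun i hi => by
      rw [hα]; exact div_mul_cancel₀ _ (hppos i hi).ne'
    have hαpos : ∀ i < k, 0 < α i := fun i hi => by
      rw [hα]; exact div_pos (hρpos i hi) (hppos i hi)
    cases k with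
    | zero => intro i hi; omega
    | succ k =>
    have h1 : ∀ i < k + 1, B 3 (r (k+1)) (p i) = 0 := by
      intro i hi
      rw [hr, map_sub, map_smul, LinearMap.sub_apply, LinearMap.smul_apply, shift, smul_eq_mul]
      rcases Nat.lt_succ_iff_lt_or_eq.mp hi with h | h
      · have := IH k (by omega) (by omega) i h
        rw [this.1, this.2]; simp
      · subst h
        rw [hρp i hi, hαm i hi]; simp
    have h2 : ∀ i < k + 1, B 3 (r (k+1)) (r i) = 0 := by
      intro i hi
      cases i with
      | zero => rw [← h0]; exact h1 0 hi
      | succ i =>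
        have e : r (i+1) = p (i+1) - β i • p i := by rw [hp]; abel
        rw [e, map_sub, map_smul, h1 _ hi, h1 i (by omega)]; simp
    have h3 : ∀ i, α i * B 4 (r (k+1)) (p i) = B 3 (r (k+1)) (r i) - B 3 (r (k+1)) (r (i+1)) := by
      intro i
      rw [hr i, map_sub, map_smul, symm 3 _ (T (p i)), shift, symm 4, smul_eq_mul]; ring
    intro i hi
    refine ⟨h1 i hi, ?_⟩
    rw [hp, map_add, map_smul, LinearMap.add_apply, LinearMap.smul_apply, smul_eq_mul]
    have hi' := h3 i
    apply (mul_eq_zero.mp (_ : α i * _ = 0)).resolve_left (hαpos i hi).ne'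
    rw [mul_add, hi', h2 i hi]
    rcases Nat.lt_succ_iff_lt_or_eq.mp hi with h | h
    · rw [h2 (i+1) (by omega), (IH k (by omega) (by omega) i h).2]; simp
    · subst h
      rw [← hρ, mul_left_comm, hαm i hi, hβ, div_mul_cancel₀ _ (hρpos i hi).ne']; ring
  have step : ∀ m, (∀ i ≤ ℓ, ∀ j ≤ ℓ, 0 ≤ B (m+1) (p i) (p j)) →
      ∀ i ≤ ℓ, ∀ j ≤ ℓ, 0 ≤ B m (p i) (p j) := by
    intro m H
    have hR : ∀ d i, i + d = ℓ → ∀ j ≤ ℓ, 0 ≤ B m (r i) (p j) := by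
      intro d
      induction d with
      | zero => 
        intro i hi j hj
        obtain rfl : i = ℓ := by omega
        simp [hfin]
      | succ d ih =>
        intro i hi j hj
        have e : r i = r (i+1) + α i • T (p i) := by rw [hr]; abel
        rw [e, map_add, map_smul, LinearMap.add_apply, LinearMap.smul_apply, shift, smul_eq_mul]
        exact add_nonneg (ih (i+1) (by omega) j hj) (mul_nonneg (αnn i) (H i (by omega) j hj))
    intro i
    induction i with
    | zero => intro hi j hj; rw [h0]; exact hR ℓ 0 (by omega) j hj
    | succ i ih =>
      intro hi j hj
      rw [hp i, map_add, map_smul, LinearMap.add_apply, LinearMap.smul_apply, smul_eq_mul]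
      exact add_nonneg (hR (ℓ - (i+1)) (i+1) (by omega) j hj)
        (mul_nonneg (βnn i) (ih (by omega) j hj))
  apply step 1
  apply step 2
  apply step 3
  intro i hi j hj
  rcases lt_trichotomy i j with h | h | h
  · rw [symm]; exact (key j hj i h).2.ge
  · subst h; exact nn _ _
  · exact (key i hi j h).2.ge




/-- Paper: Theorem 6.3(h).  cAr iteration for SPD `A` (with `ρ_k = r_kᵀA³r_k`,
`α_k = ρ_k/‖A²p_k‖²`, `β_k = ρ_{k+1}/ρ_k`), terminating at step `ℓ ≤ n`
(`r_k ≠ 0` for `k < ℓ` and `r_ℓ = 0`):  the directions satisfy `p_iᵀ A p_j ≥ 0`. -/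
theorem car_pAp_nonneg (n ℓ : ℕ) (hℓn : ℓ ≤ n)
    (A : Matrix (Fin n) (Fin n) ℝ) (hA : A.PosDef) (b : Fin n → ℝ)
    (x r p : ℕ → (Fin n → ℝ)) (ρ α β : ℕ → ℝ)
    (hx0 : x 0 = 0) (hr0 : r 0 = b) (hp0 : p 0 = b)
    (hρ : ∀ k, ρ k = r k ⬝ᵥ (A ^ 3).mulVec (r k))
    (hα : ∀ k, α k = ρ k / ((A ^ 2).mulVec (p k) ⬝ᵥ (A ^ 2).mulVec (p k)))
    (hx : ∀ k, x (k + 1) = x k + α k • p k)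
    (hr : ∀ k, r (k + 1) = r k - α k • A.mulVec (p k))
    (hβ : ∀ k, β k = ρ (k + 1) / ρ k)
    (hp : ∀ k, p (k + 1) = r (k + 1) + β k • p k)
    (hne : ∀ k < ℓ, r k ≠ 0) (hfin : r ℓ = 0) :
    ∀ i ≤ ℓ, ∀ j ≤ ℓ, 0 ≤ p i ⬝ᵥ A.mulVec (p j) := by
  have hsy : ∀ m : ℕ, (A ^ m)ᵀ = A ^ m := by
    intro m
    have h := (hA.isHermitian.pow m).eq
    rwa [conjTranspose_eq_transpose_of_trivial] at h
  have hpd : ∀ m : ℕ, (A ^ m).PosDef := fun m => 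
    (hA.posSemidef.pow m).posDef_iff_isUnit.mpr (hA.isUnit.pow m)
  have symm : ∀ (m : ℕ) (u v : Fin n → ℝ),
      u ⬝ᵥ (A ^ m).mulVec v = v ⬝ᵥ (A ^ m).mulVec u := by
    intro m u v
    rw [dotProduct_mulVec, ← mulVec_transpose, hsy, dotProduct_comm]
  have shift : ∀ (m : ℕ) (u v : Fin n → ℝ),
      A.mulVec u ⬝ᵥ (A ^ m).mulVec v = u ⬝ᵥ (A ^ (m + 1)).mulVec v := by
    intro m u v
    have h1 := hsy 1
    rw [pow_one] at h1
    rw [pow_succ', ← mulVec_mulVec, dotProduct_mulVec u, ← mulVec_transpose, h1]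
  have main := car_abstract (fun v => A.mulVec v) (fun m => Matrix.toLinearMap₂' ℝ (A ^ m))
    (by intro m u v; simpa [Matrix.toLinearMap₂'_apply'] using symm m u v)
    (by intro m u v; simpa [Matrix.toLinearMap₂'_apply'] using shift m u v)
    (by
      intro m u hu
      simpa [Matrix.toLinearMap₂'_apply'] using (hpd m).dotProduct_mulVec_pos hu)
    ℓ r p ρ α β (by rw [hp0, hr0])
    (by intro k; rw [hρ]; simp [Matrix.toLinearMap₂'_apply'])
    (by
      intro k
      rw [hα, Matrix.toLinearMap₂'_apply', ← shift 3, ← shift 2, mulVec_mulVec, ← pow_two])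
    hr hβ hp hne hfin
  intro i hi j hj
  simpa [Matrix.toLinearMap₂'_apply'] using main i hi j hj
end

section
/- For all i, j ≤ ℓ, the cAr iterates satisfy x_iᵀp_j ≥ 0. -/
open Matrix

/-- Conjugacy of the search directions of an abstract CG iteration, plus `r k = 0 → p k = 0`. -/
lemma cg_conj {V : Type*} [AddCommGroup V] [Module ℝ V] (B C : V →ₗ[ℝ] V →ₗ[ℝ] ℝ) (T : V →ₗ[ℝ] V)
    (hBs : ∀ u v, B u v = B v u) (hCs : ∀ u v, C u v = C v u) (hBC : ∀ u v, B u (T v) = C u v)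
    (hB : ∀ u, u ≠ 0 → 0 < B u u) (hC : ∀ u, u ≠ 0 → 0 < C u u)
    (r p : ℕ → V) (α β : ℕ → ℝ) (h0 : p 0 = r 0)
    (hα : ∀ k, α k = B (r k) (r k) / C (p k) (p k))
    (hr : ∀ k, r (k + 1) = r k - α k • T (p k))
    (hβ : ∀ k, β k = B (r (k + 1)) (r (k + 1)) / B (r k) (r k))
    (hp : ∀ k, p (k + 1) = r (k + 1) + β k • p k) :
    (∀ k, r k = 0 → p k = 0) ∧ ∀ i j, i ≠ j → C (p i) (p j) = 0 := by
  have hz : ∀ k, r k = 0 → p k = 0 := by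
    intro k hk
    cases k with
    | zero => rw [h0, hk]
    | succ k => rw [hp, hβ, hk]; simp
  refine ⟨hz, ?_⟩
  have main : ∀ k, (∀ i < k, B (r k) (p i) = 0) ∧ (∀ i < k, C (p k) (p i) = 0) := by
    intro k
    induction k with
    | zero => simp
    | succ k ih =>
      obtain ⟨iha, ihb⟩ := ih
      have hrp : B (r k) (p k) = B (r k) (r k) := by
        cases k with
        | zero => rw [h0]
        | succ k => rw [hp k, map_add, map_smul, iha k (by omega)]; simp
      have hak : α k * C (p k) (p k) = B (r k) (r k) := by
        by_cases h : p k = 0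
        · rw [← hrp, h]; simp
        · rw [hα, div_mul_cancel₀ _ (hC _ h).ne']
      have a : ∀ i < k + 1, B (r (k + 1)) (p i) = 0 := by
        intro i hi
        have e : B (r (k + 1)) (p i) = B (r k) (p i) - α k * C (p k) (p i) := by
          rw [hr, map_sub, map_smul, LinearMap.sub_apply, LinearMap.smul_apply, smul_eq_mul,
            hBs (T (p k)), hBC, hCs]
        rw [e]
        rcases Nat.lt_succ_iff_lt_or_eq.mp hi with h | h
        · rw [iha i h, ihb i h]; simp
        · subst h; rw [hrp, hak]; simp
      have arr : ∀ i < k + 1, B (r (k + 1)) (r i) = 0 := by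
        intro i hi
        cases i with
        | zero => rw [← h0]; exact a 0 hi
        | succ i =>
          have e : r (i + 1) = p (i + 1) - β i • p i := by rw [hp]; simp
          rw [e, map_sub, map_smul, a _ hi, a i (by omega)]; simp
      refine ⟨a, ?_⟩
      intro i hi
      have key : α i * C (r (k + 1)) (p i) = B (r (k + 1)) (r i) - B (r (k + 1)) (r (i + 1)) := by
        rw [hr i, map_sub, map_smul, hBC]; simp
      have e : C (p (k + 1)) (p i) = C (r (k + 1)) (p i) + β k * C (p k) (p i) := by
        rw [hp k]; simp
      by_cases hri : r i = 0
      · rw [hz i hri]; simp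
      by_cases hpi : p i = 0
      · rw [hpi]; simp
      have hai : α i ≠ 0 := by
        rw [hα]; exact (div_pos (hB _ hri) (hC _ hpi)).ne'
      apply (mul_eq_zero.mp _).resolve_left hai
      rw [e, mul_add, key, arr i hi]
      rcases Nat.lt_succ_iff_lt_or_eq.mp hi with h | h
      · rw [arr (i + 1) (by omega), ihb i h]; simp
      · subst h
        have hb : β i * B (r i) (r i) = B (r (i + 1)) (r (i + 1)) := by
          rw [hβ, div_mul_cancel₀ _ (hB _ hri).ne']
        linear_combination hb + β i * hak
  intro i j hij
  rcases lt_or_gt_of_ne hij with h | h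
  · rw [hCs]; exact (main j).2 i h
  · exact (main i).2 j h

/-- Descent: nonnegativity of all `⟨p i, p j⟩` passes from `C = B(·, T ·)` to `B`. -/
lemma cg_descent {V : Type*} [AddCommGroup V] [Module ℝ V] (B C : V →ₗ[ℝ] V →ₗ[ℝ] ℝ)
    (T : V →ₗ[ℝ] V) (hBC : ∀ u v, B u (T v) = C u v)
    (r p : ℕ → V) (α β : ℕ → ℝ) (h0 : p 0 = r 0) (hα : ∀ k, 0 ≤ α k) (hβ : ∀ k, 0 ≤ β k)
    (hr : ∀ k, r (k + 1) = r k - α k • T (p k))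
    (hp : ∀ k, p (k + 1) = r (k + 1) + β k • p k)
    (l : ℕ) (hl : ∀ k, l ≤ k → r k = 0)
    (h : ∀ i j, 0 ≤ C (p i) (p j)) : ∀ i j, 0 ≤ B (p i) (p j) := by
  intro i
  have h1 : ∀ d k, l ≤ k + d → 0 ≤ B (p i) (r k) := by
    intro d
    induction d with
    | zero => intro k hk; rw [hl k hk]; simp
    | succ d ih =>
      intro k hk
      have e : r k = r (k + 1) + α k • T (p k) := by rw [hr]; simp
      rw [e, map_add, map_smul, hBC]
      exact add_nonneg (ih _ (by omega)) (mul_nonneg (hα k) (h i k))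
  intro j
  induction j with
  | zero => rw [h0]; exact h1 l 0 (by omega)
  | succ j ih =>
    rw [hp, map_add, map_smul]
    exact add_nonneg (h1 l _ (by omega)) (mul_nonneg (hβ j) ih)


/-- Paper: Theorem 6.3(j).  cAr iteration for SPD `A` (with `ρ_k = r_kᵀA³r_k`,
`α_k = ρ_k/‖A²p_k‖²`, `β_k = ρ_{k+1}/ρ_k`), terminating at step `ℓ ≤ n`
(`r_k ≠ 0` for `k < ℓ` and `r_ℓ = 0`):  the iterates satisfy `x_iᵀ p_j ≥ 0`. -/
theorem car_xp_nonneg (n ℓ : ℕ) (hℓn : ℓ ≤ n)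
    (A : Matrix (Fin n) (Fin n) ℝ) (hA : A.PosDef) (b : Fin n → ℝ)
    (x r p : ℕ → (Fin n → ℝ)) (ρ α β : ℕ → ℝ)
    (hx0 : x 0 = 0) (hr0 : r 0 = b) (hp0 : p 0 = b)
    (hρ : ∀ k, ρ k = r k ⬝ᵥ (A ^ 3).mulVec (r k))
    (hα : ∀ k, α k = ρ k / ((A ^ 2).mulVec (p k) ⬝ᵥ (A ^ 2).mulVec (p k)))
    (hx : ∀ k, x (k + 1) = x k + α k • p k)
    (hr : ∀ k, r (k + 1) = r k - α k • A.mulVec (p k))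
    (hβ : ∀ k, β k = ρ (k + 1) / ρ k)
    (hp : ∀ k, p (k + 1) = r (k + 1) + β k • p k)
    (hne : ∀ k < ℓ, r k ≠ 0) (hfin : r ℓ = 0) :
    ∀ i ≤ ℓ, ∀ j ≤ ℓ, 0 ≤ x i ⬝ᵥ p j := by

  have hT : Aᵀ = A := by
    have := hA.isHermitian
    simpa [Matrix.IsHermitian, Matrix.conjTranspose_eq_transpose_of_trivial] using this
  let S : ℕ → (Fin n → ℝ) →ₗ[ℝ] (Fin n → ℝ) →ₗ[ℝ] ℝ := fun s => Matrix.toLinearMap₂' ℝ (A ^ s)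
  have hS : ∀ s u v, S s u v = u ⬝ᵥ (A ^ s).mulVec v := fun s u v =>
    Matrix.toLinearMap₂'_apply' _ _ _
  have hSs : ∀ s u v, S s u v = S s v u := by
    intro s u v
    rw [hS, hS, Matrix.dotProduct_mulVec, ← Matrix.mulVec_transpose, Matrix.transpose_pow, hT,
      dotProduct_comm]
  have hST : ∀ s u v, S s u (A.mulVecLin v) = S (s + 1) u v := by
    intro s u v
    rw [hS, hS, Matrix.mulVecLin_apply, Matrix.mulVec_mulVec, pow_succ]
  have hpos : ∀ s u, u ≠ 0 → 0 < S s u u := by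
    have one : ∀ u, u ≠ 0 → 0 < S 1 u u := by
      intro u hu
      rw [hS]
      simpa using hA.dotProduct_mulVec_pos hu
    intro s
    induction s using Nat.twoStepInduction with
    | zero =>
      intro u hu
      rw [hS]
      simpa using dotProduct_star_self_pos_iff.mpr hu
    | one => exact one
    | more s ih _ =>
      intro u hu
      rw [← hST, hSs, ← hST]
      apply ih
      intro hz
      have := one u hu
      rw [hS, pow_one, ← Matrix.mulVecLin_apply, hz] at this
      simp at this
  have hpos0 : ∀ s u, 0 ≤ S s u u := by
    intro s u
    by_cases hu : u = 0
    · rw [hu]; simp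
    · exact (hpos s u hu).le
  have h4 : ∀ u, (A ^ 2).mulVec u ⬝ᵥ (A ^ 2).mulVec u = S 4 u u := by
    intro u
    rw [hS, Matrix.dotProduct_mulVec, ← Matrix.mulVec_transpose, Matrix.transpose_pow, hT,
      Matrix.mulVec_mulVec, ← pow_add, dotProduct_comm]
  have hρ' : ∀ k, ρ k = S 3 (r k) (r k) := fun k => by rw [hρ, hS]
  have h0 : p 0 = r 0 := by rw [hp0, hr0]
  have hα' : ∀ k, α k = S 3 (r k) (r k) / S 4 (p k) (p k) := fun k => by rw [hα, hρ', h4]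
  have hβ' : ∀ k, β k = S 3 (r (k + 1)) (r (k + 1)) / S 3 (r k) (r k) := fun k => by
    rw [hβ, hρ', hρ']
  have hr' : ∀ k, r (k + 1) = r k - α k • A.mulVecLin (p k) := hr
  obtain ⟨hz, hc⟩ := cg_conj (S 3) (S 4) A.mulVecLin (hSs 3) (hSs 4) (hST 3) (hpos 3) (hpos 4)
    r p α β h0 hα' hr' hβ' hp
  have hαn : ∀ k, 0 ≤ α k := fun k => by
    rw [hα']; exact div_nonneg (hpos0 _ _) (hpos0 _ _)
  have hβn : ∀ k, 0 ≤ β k := fun k => by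
    rw [hβ']; exact div_nonneg (hpos0 _ _) (hpos0 _ _)
  have hl : ∀ k, ℓ ≤ k → r k = 0 := by
    intro k hk
    induction k, hk using Nat.le_induction with
    | base => exact hfin
    | succ k _ ih => rw [hr, hz k ih, ih]; simp
  have n4 : ∀ i j, 0 ≤ S 4 (p i) (p j) := by
    intro i j
    by_cases h : i = j
    · rw [h]; exact hpos0 _ _
    · exact (hc i j h).ge
  have step := fun s => cg_descent (S s) (S (s + 1)) A.mulVecLin (hST s) r p α β h0 hαn hβn hr' hp
    ℓ hl
  have n0 := step 0 (step 1 (step 2 (step 3 n4)))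
  intro i _ j _
  clear * - n0 hx hx0 hαn hS
  induction i with
  | zero => rw [hx0]; simp
  | succ i ih =>
    rw [hx, add_dotProduct, smul_dotProduct]
    have := n0 i j
    rw [hS] at this
    exact add_nonneg ih (mul_nonneg (hαn i) (by simpa using this))
end

section
/- For all i, j ≤ ℓ, the cAr residuals and directions satisfy r_iᵀAp_j ≥ 0. -/
open Matrix

/-- Paper: Theorem 6.3(k).  cAr iteration for SPD `A` (with `ρ_k = r_kᵀA³r_k`,
`α_k = ρ_k/‖A²p_k‖²`, `β_k = ρ_{k+1}/ρ_k`), terminating at step `ℓ ≤ n`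
(`r_k ≠ 0` for `k < ℓ` and `r_ℓ = 0`):  the residuals and directions satisfy `r_iᵀ A p_j ≥ 0`. -/
theorem car_rAp_nonneg (n ℓ : ℕ) (hℓn : ℓ ≤ n)
    (A : Matrix (Fin n) (Fin n) ℝ) (hA : A.PosDef) (b : Fin n → ℝ)
    (x r p : ℕ → (Fin n → ℝ)) (ρ α β : ℕ → ℝ)
    (hx0 : x 0 = 0) (hr0 : r 0 = b) (hp0 : p 0 = b)
    (hρ : ∀ k, ρ k = r k ⬝ᵥ (A ^ 3).mulVec (r k))
    (hα : ∀ k, α k = ρ k / ((A ^ 2).mulVec (p k) ⬝ᵥ (A ^ 2).mulVec (p k)))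
    (hx : ∀ k, x (k + 1) = x k + α k • p k)
    (hr : ∀ k, r (k + 1) = r k - α k • A.mulVec (p k))
    (hβ : ∀ k, β k = ρ (k + 1) / ρ k)
    (hp : ∀ k, p (k + 1) = r (k + 1) + β k • p k)
    (hne : ∀ k < ℓ, r k ≠ 0) (hfin : r ℓ = 0) :
    ∀ i ≤ ℓ, ∀ j ≤ ℓ, 0 ≤ r i ⬝ᵥ A.mulVec (p j) := by
  classical
  have hT : Aᵀ = A := by
    have := hA.1
    rwa [Matrix.IsHermitian, Matrix.conjTranspose_eq_transpose_of_trivial] at this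
  obtain ⟨f, hf⟩ : ∃ f : ℕ → (Fin n → ℝ) → (Fin n → ℝ) → ℝ,
      ∀ s u v, f s u v = u ⬝ᵥ (A ^ s).mulVec v := ⟨_, fun _ _ _ => rfl⟩
  have fsymm : ∀ s u v, f s u v = f s v u := by
    intro s u v
    rw [hf, hf, dotProduct_comm, ← Matrix.vecMul_transpose, Matrix.transpose_pow, hT,
      ← Matrix.dotProduct_mulVec]
  have fadd : ∀ s u v w, f s (u + v) w = f s u w + f s v w := by
    intro s u v w; simp [hf, add_dotProduct]
  have fsub : ∀ s u v w, f s (u - v) w = f s u w - f s v w := by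
    intro s u v w; simp [hf, sub_dotProduct]
  have fsmul : ∀ s (c : ℝ) u w, f s (c • u) w = c * f s u w := by
    intro s c u w; simp [hf, smul_dotProduct]
  have fzero : ∀ s w, f s 0 w = 0 := by
    intro s w; simp [hf]
  have fA : ∀ s u w, f s (A.mulVec u) w = f (s + 1) u w := by
    intro s u w
    rw [fsymm, fsymm (s + 1), hf, hf, Matrix.mulVec_mulVec, pow_succ]
  have f4 : ∀ u, f 4 u u = (A ^ 2).mulVec u ⬝ᵥ (A ^ 2).mulVec u := by
    intro u
    rw [← fA 3, ← fA 2, hf, Matrix.mulVec_mulVec, ← pow_two]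
  have f3 : ∀ u, f 3 u u = A.mulVec u ⬝ᵥ A.mulVec (A.mulVec u) := by
    intro u
    rw [← fA 2, hf, Matrix.mulVec_mulVec, ← pow_two]
  have hpos : ∀ u, u ≠ 0 → 0 < u ⬝ᵥ A.mulVec u := by
    intro u hu
    simpa using hA.dotProduct_mulVec_pos hu
  have hinj : ∀ u, A.mulVec u = 0 → u = 0 := by
    intro u hu
    by_contra h
    have := hpos u h
    rw [hu] at this
    simp at this
  have f3pos : ∀ u, u ≠ 0 → 0 < f 3 u u := by
    intro u hu
    rw [f3]
    exact hpos _ (fun h => hu (hinj u h))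
  have f3nn : ∀ u, 0 ≤ f 3 u u := by
    intro u
    by_cases h : u = 0
    · rw [h, fzero]
    · exact (f3pos u h).le
  have f4nn : ∀ u, 0 ≤ f 4 u u := by
    intro u; rw [f4]
    exact Finset.sum_nonneg (fun i _ => mul_self_nonneg _)
  have f4z : ∀ u, f 4 u u = 0 → u = 0 := by
    intro u hu
    rw [f4, dotProduct_self_eq_zero, pow_two, ← Matrix.mulVec_mulVec] at hu
    exact hinj _ (hinj _ hu)
  have hρ' : ∀ k, ρ k = f 3 (r k) (r k) := by intro k; rw [hρ, hf]
  have hα' : ∀ k, α k = ρ k / f 4 (p k) (p k) := by intro k; rw [hα, f4]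
  have ρnn : ∀ k, 0 ≤ ρ k := fun k => by rw [hρ']; exact f3nn _
  have αnn : ∀ k, 0 ≤ α k := fun k => by rw [hα']; exact div_nonneg (ρnn k) (f4nn _)
  have βnn : ∀ k, 0 ≤ β k := fun k => by rw [hβ]; exact div_nonneg (ρnn _) (ρnn _)
  have rz : ∀ k, ρ k = 0 → r k = 0 := by
    intro k h
    by_contra h'
    have := f3pos _ h'
    rw [← hρ', h] at this
    exact lt_irrefl _ this
  have pz : ∀ k, ρ k = 0 → p k = 0 := by
    intro k h
    have h1 := rz k h
    cases k with
    | zero => rw [hp0, ← hr0, h1]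
    | succ k => rw [hp, h1, hβ, h]; simp
  -- recurrences through the form
  have fr : ∀ s k w, f s (r (k + 1)) w = f s (r k) w - α k * f (s + 1) (p k) w := by
    intro s k w; rw [hr, fsub, fsmul, fA]
  have fp : ∀ s k w, f s (p (k + 1)) w = f s (r (k + 1)) w + β k * f s (p k) w := by
    intro s k w; rw [hp, fadd, fsmul]
  have hrp0 : r 0 = p 0 := by rw [hr0, hp0]
  -- residual orthogonality from direction orthogonality
  have rr : ∀ k i (w : Fin n → ℝ), (∀ j < k, f 3 w (p j) = 0) → i < k → f 3 w (r i) = 0 := by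
    intro k i w h hi
    rw [fsymm]
    cases i with
    | zero => rw [hrp0, fsymm]; exact h 0 hi
    | succ i =>
      have e := fp 3 i w
      rw [fsymm 3 _ w, fsymm 3 (p i) w, h _ hi, h i (by omega)] at e
      linarith
  have key : ∀ k, (∀ j < k, f 3 (r k) (p j) = 0) ∧ (∀ j < k, f 4 (p k) (p j) = 0) ∧
      f 3 (r k) (p k) = ρ k := by
    intro k
    induction k using Nat.strong_induction_on with | _ k IH
    cases k with
    | zero => exact ⟨by simp, by simp, by rw [hρ', ← hrp0]⟩
    | succ k =>
      obtain ⟨h1, h2, h3⟩ := IH k (by omega)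
      have αρ : α k * f 4 (p k) (p k) = ρ k := by
        by_cases h : f 4 (p k) (p k) = 0
        · rw [h, mul_zero, ← h3, f4z _ h, fsymm, fzero]
        · rw [hα']; field_simp
      have H1 : ∀ j < k + 1, f 3 (r (k + 1)) (p j) = 0 := by
        intro j hj
        rw [fr]
        rcases Nat.lt_succ_iff_lt_or_eq.mp hj with h | h
        · rw [h1 j h, h2 j h]; ring
        · rw [h, h3, αρ]; ring
      have R1 := fun i hi => rr (k + 1) i (r (k + 1)) H1 hi
      refine ⟨H1, ?_, ?_⟩
      · intro j hj
        by_cases h0 : ρ j = 0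
        · rw [pz j h0, fsymm, fzero]
        have e := fr 3 j (r (k + 1))
        rw [fsymm 3 (r j), R1 j hj, fsymm 4] at e
        rw [fp]
        rcases Nat.lt_succ_iff_lt_or_eq.mp hj with h | h
        · rw [fsymm 3, R1 (j + 1) (by omega)] at e
          rw [h2 j h]
          have hαj : α j ≠ 0 := by
            intro ha
            rw [hα', div_eq_zero_iff] at ha
            rcases ha with ha | ha
            · exact h0 ha
            · have hpj := f4z _ ha
              have hz := (IH j hj).2.2
              rw [hpj, fsymm, fzero] at hz
              exact h0 hz.symm
          have : f 4 (r (k + 1)) (p j) = 0 := by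
            have : α j * f 4 (r (k + 1)) (p j) = 0 := by linarith
            exact (mul_eq_zero.mp this).resolve_left hαj
          rw [this]; ring
        · subst h
          have hb : β j * ρ j = ρ (j + 1) := by rw [hβ]; field_simp
          rw [← hρ'] at e
          have ha : α j ≠ 0 := by
            intro ha; rw [ha, zero_mul] at αρ; exact h0 αρ.symm
          have : α j * (f 4 (r (j + 1)) (p j) + β j * f 4 (p j) (p j)) = 0 := by
            linear_combination e + β j * αρ + hb
          exact (mul_eq_zero.mp this).resolve_left ha
      · rw [fsymm, fp, ← hρ', fsymm, H1 k (by omega)]; ring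
  have pos3 : ∀ i j, 0 ≤ f 3 (r i) (p j) := by
    intro i j
    rcases lt_or_ge j i with h | h
    · exact ((key i).1 j h).ge
    · induction j, h using Nat.le_induction with
      | base => rw [(key i).2.2]; exact ρnn i
      | succ j hj ih =>
        rw [fsymm, fp, rr (j + 1) i _ (key (j + 1)).1 (by omega), fsymm, zero_add]
        exact mul_nonneg (βnn j) ih
  have up : ∀ s j, (∀ i ≤ ℓ, 0 ≤ f s (r i) (p j)) → ∀ i ≤ ℓ, 0 ≤ f s (p i) (p j) := by
    intro s j h i
    induction i with
    | zero => intro h0; rw [← hrp0]; simpa [hrp0] using h 0 h0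
    | succ i ih =>
      intro hi
      rw [fp]
      exact add_nonneg (h _ hi) (mul_nonneg (βnn i) (ih (by omega)))
  have down : ∀ s j, (∀ i ≤ ℓ, 0 ≤ f (s + 1) (p i) (p j)) → ∀ i ≤ ℓ, 0 ≤ f s (r i) (p j) := by
    intro s j h i hi
    induction hi using Nat.decreasingInduction with
    | self => rw [hfin, fzero]
    | of_succ i hi ih =>
      have e := fr s i (p j)
      have := mul_nonneg (αnn i) (h i (by omega))
      linarith
  intro i hi j _
  have := down 1 j (up 2 j (down 2 j (up 3 j (fun i _ => pos3 i j)))) i hi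
  rwa [hf, pow_one] at this
end

section
/- Let x* = A⁻¹b be the exact solution of Ax = b. Then for all 1 ≤ k ≤ ℓ, the cAr (equivalently MinAres) iterates satisfy ‖x_{k−1}‖ ≤ ‖x_k‖ (the norms of the iterates increase monotonically) and ‖x* − x_k‖ ≤ ‖x* − x_{k−1}‖ (the error norms decrease monotonically). -/
open Matrix

section aux
variable {E : Type*} [NormedAddCommGroup E] [InnerProductSpace ℝ E]

/-- Abstract version of the result for a symmetric positive operator. -/
theorem car_aux (T : E →ₗ[ℝ] E) (hsym : ∀ u v, inner ℝ (T u) v = inner ℝ u (T v))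
    (hpos : ∀ u, u ≠ 0 → 0 < inner ℝ u (T u)) (ℓ : ℕ) (b xstar : E)
    (x r p : ℕ → E) (ρ α β : ℕ → ℝ) (hxs : T xstar = b)
    (hx0 : x 0 = 0) (hr0 : r 0 = b) (hp0 : p 0 = b)
    (hρ : ∀ k, ρ k = inner ℝ (T (r k)) (T (T (r k))))
    (hα : ∀ k, α k = ρ k / inner ℝ (T (T (p k))) (T (T (p k))))
    (hx : ∀ k, x (k + 1) = x k + α k • p k)
    (hr : ∀ k, r (k + 1) = r k - α k • T (p k))
    (hβ : ∀ k, β k = ρ (k + 1) / ρ k)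
    (hp : ∀ k, p (k + 1) = r (k + 1) + β k • p k)
    (hne : ∀ k < ℓ, r k ≠ 0) (hfin : r ℓ = 0) :
    ∀ k, k < ℓ → ‖x k‖ ≤ ‖x (k + 1)‖ ∧ ‖xstar - x (k + 1)‖ ≤ ‖xstar - x k‖ := by
  have hinj : ∀ u, u ≠ 0 → T u ≠ 0 := by
    intro u hu h
    have := hpos u hu
    rw [h, inner_zero_right] at this
    exact lt_irrefl _ this
  have hρnn : ∀ k, 0 ≤ ρ k := by
    intro k
    rw [hρ]
    by_cases h : T (r k) = 0
    · simp [h]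
    · exact (hpos _ h).le
  have hρpos : ∀ k < ℓ, 0 < ρ k := by
    intro k hk
    rw [hρ]
    exact hpos _ (hinj _ (hne k hk))
  have hβnn : ∀ k, 0 ≤ β k := fun k => by
    rw [hβ]; exact div_nonneg (hρnn _) (hρnn _)
  have hαnn : ∀ k, 0 ≤ α k := fun k => by
    rw [hα]; exact div_nonneg (hρnn _) real_inner_self_nonneg
  -- orthogonality transfers from `p` to `r`
  have orth_r : ∀ (v : E) (m : ℕ), (∀ i < m, inner ℝ (T (p i)) v = 0) →
      ∀ i < m, inner ℝ (T (r i)) v = 0 := by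
    intro v m h i hi
    cases i with
    | zero => rw [hr0, ← hp0]; exact h 0 hi
    | succ j =>
      have e : r (j + 1) = p (j + 1) - β j • p j := by rw [hp]; abel
      rw [e, map_sub, map_smul, inner_sub_left, inner_smul_left, h _ hi, h j (by omega)]
      simp
  have key : ∀ k ≤ ℓ, (∀ i < k, 0 < α i) ∧
      (∀ i < k, inner ℝ (T (p i)) (T (T (r k))) = 0) ∧
      (∀ i < k, inner ℝ (T (T (p i))) (T (T (p k))) = 0) := by
    intro k
    induction k with
    | zero => intro _; refine ⟨?_, ?_, ?_⟩ <;> intro i hi <;> omega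
    | succ k ih =>
      intro hk
      obtain ⟨h1, h2, h3⟩ := ih (by omega)
      have hpr : inner ℝ (T (p k)) (T (T (r k))) = ρ k := by
        cases k with
        | zero => rw [hρ, hr0, hp0]
        | succ j =>
          rw [hp, map_add, map_smul, inner_add_left, inner_smul_left, h2 j (by omega), hρ]
          simp
      have hρk := hρpos k (by omega)
      have hC : 0 < inner ℝ (T (T (p k))) (T (T (p k))) := by
        apply lt_of_le_of_ne real_inner_self_nonneg
        intro h
        have h0 := inner_self_eq_zero.1 h.symm
        have : inner ℝ (T (p k)) (T (T (r k))) = 0 := by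
          rw [← hsym, h0, inner_zero_left]
        linarith
      have hαk : 0 < α k := by rw [hα]; exact div_pos hρk hC
      have hα' : ∀ i < k + 1, 0 < α i := by
        intro i hi
        rcases Nat.lt_succ_iff_lt_or_eq.1 hi with h | rfl
        · exact h1 i h
        · exact hαk
      have hαC : α k * inner ℝ (T (T (p k))) (T (T (p k))) = ρ k := by
        rw [hα]; field_simp
      have h2' : ∀ i < k + 1, inner ℝ (T (p i)) (T (T (r (k + 1)))) = 0 := by
        intro i hi
        rw [hr, map_sub, map_smul, map_sub, map_smul, inner_sub_right, inner_smul_right,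
          ← hsym (T (p i)) (T (T (p k)))]
        rcases Nat.lt_succ_iff_lt_or_eq.1 hi with h | rfl
        · rw [h2 i h, h3 i h]; simp
        · rw [hpr, hαC]; simp
      refine ⟨hα', h2', ?_⟩
      have h4 := orth_r _ _ h2'
      intro i hi
      have hai := hα' i hi
      have e1 : α i * inner ℝ (T (T (p i))) (T (T (r (k + 1)))) =
          - inner ℝ (T (r (i + 1))) (T (T (r (k + 1)))) := by
        rw [hr i, map_sub, map_smul, inner_sub_left, real_inner_smul_left, h4 i hi]
        ring
      have e2 : α i * inner ℝ (T (T (p i))) (T (T (p (k + 1)))) = 0 := by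
        rw [hp k, map_add, map_add, map_smul, map_smul, inner_add_right, inner_smul_right,
          mul_add, e1]
        rcases Nat.lt_succ_iff_lt_or_eq.1 hi with h | rfl
        · rw [h3 i h, h4 (i + 1) (by omega)]; simp
        · rw [← hρ, hβ, mul_left_comm, hαC]; field_simp; ring
      exact (mul_eq_zero.1 e2).resolve_left hai.ne'
  have hrr : ∀ s ≤ ℓ, ∀ t ≤ ℓ, 0 ≤ inner ℝ (T (r s)) (T (T (r t))) := by
    intro s hs t ht
    rcases lt_trichotomy s t with h | rfl | h
    · exact (orth_r _ _ (key t ht).2.1 s h).ge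
    · rw [← hρ]; exact hρnn _
    · rw [← hsym, real_inner_comm]
      exact (orth_r _ _ (key s hs).2.1 t h).ge
  have up : ∀ F : E →ₗ[ℝ] ℝ, (∀ j ≤ ℓ, 0 ≤ F (r j)) → ∀ j ≤ ℓ, 0 ≤ F (p j) := by
    intro F hF j
    induction j with
    | zero => intro h; rw [hp0, ← hr0]; exact hF 0 h
    | succ j ih =>
      intro h
      rw [hp, map_add, map_smul, smul_eq_mul]
      exact add_nonneg (hF _ h) (mul_nonneg (hβnn _) (ih (by omega)))
  have down : ∀ F : E →ₗ[ℝ] ℝ, (∀ j ≤ ℓ, 0 ≤ F (T (p j))) → ∀ j ≤ ℓ, 0 ≤ F (r j) := by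
    intro F hF j hj
    induction hj using Nat.decreasingInduction with
    | self => rw [hfin, map_zero]
    | of_succ j h ih =>
      have e : r j = r (j + 1) + α j • T (p j) := by rw [hr]; abel
      rw [e, map_add, map_smul, smul_eq_mul]
      exact add_nonneg ih (mul_nonneg (hαnn _) (hF _ h.le))
  let I : E → E →ₗ[ℝ] ℝ := fun u => (innerₛₗ ℝ u)
  have hpp : ∀ s ≤ ℓ, ∀ t ≤ ℓ, 0 ≤ inner ℝ (p s) (p t) := by
    have a1 : ∀ s ≤ ℓ, ∀ t ≤ ℓ, 0 ≤ inner ℝ (T (r s)) (T (T (p t))) := fun s hs =>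
      up (I (T (r s)) ∘ₗ T ∘ₗ T) (hrr s hs)
    have a2 : ∀ s ≤ ℓ, ∀ t ≤ ℓ, 0 ≤ inner ℝ (T (r s)) (T (p t)) := fun s hs =>
      up (I (T (r s)) ∘ₗ T) (down (I (T (r s)) ∘ₗ T) (a1 s hs))
    have a3 : ∀ s ≤ ℓ, ∀ t ≤ ℓ, 0 ≤ inner ℝ (T (r s)) (p t) := fun s hs =>
      up (I (T (r s))) (down (I (T (r s))) (a2 s hs))
    have a4 : ∀ s ≤ ℓ, ∀ t ≤ ℓ, 0 ≤ inner ℝ (r s) (p t) := fun s hs =>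
      up (I (r s)) (down (I (r s)) (fun t ht => by
        have := a3 s hs t ht
        rw [hsym] at this
        exact this))
    intro s hs t ht
    rw [real_inner_comm]
    exact up (I (p t)) (fun j hj => by
      have := a4 j hj t ht
      rw [real_inner_comm] at this
      exact this) s hs
  have hres : ∀ k, T (x k) + r k = b := by
    intro k
    induction k with
    | zero => rw [hx0, hr0, map_zero, zero_add]
    | succ k ih => rw [hx, hr, map_add, map_smul, ← ih]; abel
  have hxl : xstar = x ℓ := by
    by_contra h
    apply hinj _ (sub_ne_zero.2 h)
    have := hres ℓ
    rw [hfin, add_zero] at this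
    rw [map_sub, hxs, this, sub_self]
  have hxp : ∀ k ≤ ℓ, ∀ t ≤ ℓ, 0 ≤ inner ℝ (x k) (p t) := by
    intro k
    induction k with
    | zero => intro _ t _; rw [hx0, inner_zero_left]
    | succ k ih =>
      intro hk t ht
      rw [hx, inner_add_left, real_inner_smul_left]
      exact add_nonneg (ih (by omega) t ht)
        (mul_nonneg (hαnn _) (hpp k (by omega) t ht))
  have hep : ∀ k ≤ ℓ, ∀ t ≤ ℓ, 0 ≤ inner ℝ (xstar - x k) (p t) := by
    intro k hk
    induction hk using Nat.decreasingInduction with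
    | self => intro t _; rw [hxl, sub_self, inner_zero_left]
    | of_succ k h ih =>
      intro t ht
      have e : xstar - x k = (xstar - x (k + 1)) + α k • p k := by rw [hx]; abel
      rw [e, inner_add_left, real_inner_smul_left]
      exact add_nonneg (ih t ht) (mul_nonneg (hαnn _) (hpp k h.le t ht))
  have grow : ∀ (u v : E) (a : ℝ), 0 ≤ a → 0 ≤ inner ℝ u v → ‖u‖ ≤ ‖u + a • v‖ := by
    intro u v a ha h
    refine (sq_le_sq₀ (norm_nonneg _) (norm_nonneg _)).1 ?_
    rw [norm_add_sq_real, inner_smul_right]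
    have := mul_nonneg ha h
    nlinarith [sq_nonneg ‖a • v‖]
  intro k hk
  constructor
  · rw [hx]; exact grow _ _ _ (hαnn k) (hxp k hk.le k hk.le)
  · have e : xstar - x k = (xstar - x (k + 1)) + α k • p k := by rw [hx]; abel
    rw [e]; exact grow _ _ _ (hαnn k) (hep (k + 1) hk k hk.le)

end aux


/-- Paper: Theorem 6.4 (first two items).  For the cAr (equivalently MinAres) iteration on
an SPD system `A x = b` with exact solution `x* = A⁻¹ b`, the iterate norms `‖x_k‖`
increase monotonically and the error norms `‖x* − x_k‖` decrease monotonically. -/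
theorem car_iterate_and_error_norms_monotone (n ℓ : ℕ) (hℓn : ℓ ≤ n)
    (A : Matrix (Fin n) (Fin n) ℝ) (hA : A.PosDef) (b : EuclideanSpace ℝ (Fin n))
    (x r p : ℕ → EuclideanSpace ℝ (Fin n)) (ρ α β : ℕ → ℝ)
    (xstar : EuclideanSpace ℝ (Fin n)) (hxstar : xstar = A⁻¹.mulVec b)
    (hx0 : x 0 = 0) (hr0 : r 0 = b) (hp0 : p 0 = b)
    (hρ : ∀ k, ρ k = r k ⬝ᵥ (A ^ 3).mulVec (r k))
    (hα : ∀ k, α k = ρ k / ((A ^ 2).mulVec (p k) ⬝ᵥ (A ^ 2).mulVec (p k)))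
    (hx : ∀ k, x (k + 1) = x k + α k • p k)
    (hr : ∀ k, r (k + 1)
            = r k - α k • (EuclideanSpace.equiv (Fin n) ℝ).symm (A.mulVec (p k)))
    (hβ : ∀ k, β k = ρ (k + 1) / ρ k)
    (hp : ∀ k, p (k + 1) = r (k + 1) + β k • p k)
    (hne : ∀ k < ℓ, r k ≠ 0) (hfin : r ℓ = 0) :
    ∀ k, 1 ≤ k → k ≤ ℓ → ‖x (k - 1)‖ ≤ ‖x k‖ ∧ ‖xstar - x k‖ ≤ ‖xstar - x (k - 1)‖ := by
  have hAt : Aᵀ = A := by simpa using hA.isHermitian.eq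
  have hin : ∀ u v : EuclideanSpace ℝ (Fin n), inner ℝ u v = u.ofLp ⬝ᵥ v.ofLp := by
    intro u v
    rw [EuclideanSpace.inner_eq_star_dotProduct, dotProduct_comm]
    simp
  have hT : ∀ u : EuclideanSpace ℝ (Fin n),
      (Matrix.toLpLin 2 2 A u).ofLp = A *ᵥ u.ofLp := fun u => rfl
  have hmv : ∀ u v : Fin n → ℝ, (A *ᵥ u) ⬝ᵥ v = u ⬝ᵥ (A *ᵥ v) := by
    intro u v
    rw [dotProduct_mulVec, ← mulVec_transpose, hAt]
  intro k hk1 hk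
  obtain ⟨k, rfl⟩ : ∃ j, k = j + 1 := ⟨k - 1, by omega⟩
  refine car_aux (Matrix.toLpLin 2 2 A) ?_ ?_ ℓ b xstar x r p ρ α β ?_ hx0 hr0 hp0 ?_ ?_ hx
    ?_ hβ hp hne hfin k (by omega)
  · intro u v
    rw [hin, hin, hT, hT, hmv]
  · intro u hu
    rw [hin, hT]
    have := hA.dotProduct_mulVec_pos (x := u.ofLp) (by simpa using hu)
    simpa using this
  · have hdet : IsUnit A.det := hA.det_pos.ne'.isUnit
    apply WithLp.ofLp_injective 2
    rw [hT, hxstar, mulVec_mulVec, Matrix.mul_nonsing_inv _ hdet, one_mulVec]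
  · intro k
    rw [hρ, hin, hT, hT, hT, hmv, mulVec_mulVec, mulVec_mulVec]
    congr 2
    noncomm_ring
  · intro k
    rw [hα, hin, hT, hT, mulVec_mulVec, pow_two]
  · intro k
    rw [hr]
    rfl
end

section
/- Let x* = A⁻¹b be the exact solution of Ax = b. Then for all 1 ≤ k ≤ ℓ, the cAr (equivalently MinAres) iterates satisfy (x* − x_k)ᵀA(x* − x_k) ≤ (x* − x_{k−1})ᵀA(x* − x_{k−1}) (the energy-norm errors ‖x* − x_k‖_A decrease monotonically) and ‖r_k‖ ≤ ‖r_{k−1}‖ (the residual norms decrease monotonically). -/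
open Matrix

/-- One rung of the sign ladder. -/
lemma car_ladder {V : Type*} [AddCommGroup V] [Module ℝ V] (T : V →ₗ[ℝ] V)
    (B : ℕ → V →ₗ[ℝ] V →ₗ[ℝ] ℝ) (hT : ∀ m u v, B m (T u) v = B (m + 1) u v)
    (ℓ : ℕ) (r p : ℕ → V) (α β : ℕ → ℝ) (hα : ∀ k, 0 ≤ α k) (hβ : ∀ k, 0 ≤ β k)
    (hp0 : p 0 = r 0)
    (hr : ∀ k, r (k + 1) = r k - α k • T (p k))
    (hp : ∀ k, p (k + 1) = r (k + 1) + β k • p k) (hfin : r ℓ = 0) (m : ℕ)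
    (h : ∀ i < ℓ, ∀ j < ℓ, 0 ≤ B (m + 1) (p i) (p j)) :
    (∀ i ≤ ℓ, ∀ j < ℓ, 0 ≤ B m (r i) (p j)) ∧ (∀ i < ℓ, ∀ j < ℓ, 0 ≤ B m (p i) (p j)) := by
  have h1 : ∀ i ≤ ℓ, ∀ j < ℓ, 0 ≤ B m (r i) (p j) := by
    intro i hi j hj
    induction hi using Nat.decreasingInduction with
    | self => simp [hfin]
    | of_succ k hk ih =>
      have e : r k = r (k + 1) + α k • T (p k) := by rw [hr]; abel
      rw [e, map_add, map_smul, LinearMap.add_apply, LinearMap.smul_apply, hT, smul_eq_mul]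
      have := mul_nonneg (hα k) (h k hk j hj)
      linarith
  refine ⟨h1, ?_⟩
  intro i hi j hj
  induction i with
  | zero => rw [hp0]; exact h1 0 hi.le j hj
  | succ k ih =>
    rw [hp, map_add, map_smul, LinearMap.add_apply, LinearMap.smul_apply, smul_eq_mul]
    have := mul_nonneg (hβ k) (ih (by omega))
    have := h1 (k + 1) hi.le j hj
    linarith

/-- Conjugacy of the directions. -/
lemma car_orth {V : Type*} [AddCommGroup V] [Module ℝ V] (T : V →ₗ[ℝ] V)
    (B : ℕ → V →ₗ[ℝ] V →ₗ[ℝ] ℝ) (hT : ∀ m u v, B m (T u) v = B (m + 1) u v)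
    (hs : ∀ m u v, B m u v = B m v u) (hpos : ∀ m u, u ≠ 0 → 0 < B m u u)
    (ℓ : ℕ) (r p : ℕ → V) (ρ α β : ℕ → ℝ)
    (hp0 : p 0 = r 0)
    (hρ : ∀ k, ρ k = B 3 (r k) (r k))
    (hα : ∀ k, α k = ρ k / B 4 (p k) (p k))
    (hr : ∀ k, r (k + 1) = r k - α k • T (p k))
    (hβ : ∀ k, β k = ρ (k + 1) / ρ k)
    (hp : ∀ k, p (k + 1) = r (k + 1) + β k • p k)
    (hne : ∀ k < ℓ, r k ≠ 0) :
    ∀ k < ℓ, ∀ j < k, B 4 (p k) (p j) = 0 ∧ B 3 (r k) (p j) = 0 ∧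
      0 < B 4 (p j) (p j) := by
  intro k
  induction k with
  | zero => intro _ j hj; omega
  | succ k ih =>
    intro hk
    have ih := ih (by omega)
    have hρpos : ∀ j ≤ k, 0 < ρ j := fun j hj => by
      rw [hρ]; exact hpos _ _ (hne j (by omega))
    have hrp : B 3 (r k) (p k) = ρ k := by
      cases k with
      | zero => rw [hp0, hρ]
      | succ k =>
        rw [hp, map_add, map_smul, (ih k (by omega)).2.1, hρ]; simp
    have hDk : 0 < B 4 (p k) (p k) := by
      apply hpos
      intro h
      have := hρpos k le_rfl
      rw [h] at hrp
      simp at hrp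
      linarith
    have h3 : ∀ j ≤ k, B 3 (r (k + 1)) (p j) = 0 := by
      intro j hj
      rw [hr, map_sub, map_smul, LinearMap.sub_apply, LinearMap.smul_apply, hT, smul_eq_mul]
      rcases hj.lt_or_eq with hj | rfl
      · rw [(ih j hj).1, (ih j hj).2.1]; simp
      · rw [hrp, hα]; field_simp; simp
    have h3r : ∀ j ≤ k, B 3 (r (k + 1)) (r j) = 0 := by
      intro j hj
      cases j with
      | zero => rw [← hp0]; exact h3 0 hj
      | succ j =>
        have e : r (j + 1) = p (j + 1) - β j • p j := by rw [hp]; abel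
        rw [e, map_sub, map_smul, h3 _ hj, h3 _ (by omega)]; simp
    have h4 : ∀ j ≤ k, α j * B 4 (r (k + 1)) (p j)
        = B 3 (r (k + 1)) (r j) - B 3 (r (k + 1)) (r (j + 1)) := by
      intro j _
      rw [hr j, map_sub, map_smul, hs 3 _ (T (p j)), hT, hs 4 (p j), smul_eq_mul]; ring
    intro j hj
    refine ⟨?_, h3 j (by omega), ?_⟩
    swap
    · rcases (Nat.lt_succ_iff.mp hj).lt_or_eq with hj' | rfl
      · exact (ih j hj').2.2
      · exact hDk
    rw [hp, map_add, map_smul, LinearMap.add_apply, LinearMap.smul_apply, smul_eq_mul]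
    rcases (Nat.lt_succ_iff.mp hj).lt_or_eq with hj' | rfl
    · have h5 := h4 j hj'.le
      rw [h3r j hj'.le, h3r (j + 1) hj', sub_zero] at h5
      have hαj : α j ≠ 0 := by
        rw [hα]
        have h6 := hρpos j hj'.le
        exact div_ne_zero h6.ne' (ih j hj').2.2.ne'
      rw [(ih j hj').1, (mul_eq_zero.mp h5).resolve_left hαj]; simp
    · have h5 := h4 j le_rfl
      rw [h3r j le_rfl, ← hρ, hα] at h5
      have h6 := hρpos j le_rfl
      rw [hβ]
      field_simp at h5 ⊢
      linarith

/-- Abstract form of the two sign facts and of the monotonicity. -/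
lemma car_signs {V : Type*} [AddCommGroup V] [Module ℝ V] (T : V →ₗ[ℝ] V)
    (B : ℕ → V →ₗ[ℝ] V →ₗ[ℝ] ℝ) (hT : ∀ m u v, B m (T u) v = B (m + 1) u v)
    (hs : ∀ m u v, B m u v = B m v u) (hpos : ∀ m u, u ≠ 0 → 0 < B m u u)
    (ℓ : ℕ) (x r p : ℕ → V) (ρ α β : ℕ → ℝ) (xs : V)
    (hp0 : p 0 = r 0) (hx0 : T (xs - x 0) = r 0)
    (hρ : ∀ k, ρ k = B 3 (r k) (r k))
    (hα : ∀ k, α k = ρ k / B 4 (p k) (p k))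
    (hx : ∀ k, x (k + 1) = x k + α k • p k)
    (hr : ∀ k, r (k + 1) = r k - α k • T (p k))
    (hβ : ∀ k, β k = ρ (k + 1) / ρ k)
    (hp : ∀ k, p (k + 1) = r (k + 1) + β k • p k)
    (hne : ∀ k < ℓ, r k ≠ 0) (hfin : r ℓ = 0) (k : ℕ) (hk : k < ℓ) :
    B 1 (xs - x (k + 1)) (xs - x (k + 1)) ≤ B 1 (xs - x k) (xs - x k) ∧
      B 0 (r (k + 1)) (r (k + 1)) ≤ B 0 (r k) (r k) := by
  have hnn : ∀ m u, 0 ≤ B m u u := fun m u => by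
    by_cases h : u = 0
    · simp [h]
    · exact (hpos _ _ h).le
  have hρ0 : ∀ k, 0 ≤ ρ k := fun k => by rw [hρ]; exact hnn _ _
  have hα0 : ∀ k, 0 ≤ α k := fun k => by rw [hα]; exact div_nonneg (hρ0 k) (hnn _ _)
  have hβ0 : ∀ k, 0 ≤ β k := fun k => by rw [hβ]; exact div_nonneg (hρ0 _) (hρ0 _)
  have ho := car_orth T B hT hs hpos ℓ r p ρ α β hp0 hρ hα hr hβ hp hne
  have h4 : ∀ i < ℓ, ∀ j < ℓ, 0 ≤ B (3 + 1) (p i) (p j) := by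
    intro i hi j hj
    rcases lt_trichotomy i j with h | h | h
    · rw [hs]; exact (ho j hj i h).1.ge
    · rw [h]; exact hnn _ _
    · exact (ho i hi j h).1.ge
  have L := car_ladder T B hT ℓ r p α β hα0 hβ0 hp0 hr hp hfin
  have h1 := L 1 (L 2 (L 3 h4).2).2
  have h0 := L 0 h1.2
  have hTe : ∀ k, T (xs - x k) = r k := by
    intro k
    induction k with
    | zero => exact hx0
    | succ k ih => rw [hx, hr, ← ih, ← sub_sub, map_sub, map_smul]
  constructor
  · have e : xs - x k = (xs - x (k + 1)) + α k • p k := by rw [hx]; abel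
    have c : B 1 (xs - x (k + 1)) (p k) = B 0 (r (k + 1)) (p k) := by rw [← hTe, hT]
    rw [e]
    simp only [map_add, map_smul, LinearMap.add_apply, LinearMap.smul_apply, smul_eq_mul]
    rw [hs 1 (p k) (xs - x (k + 1)), c]
    have := mul_nonneg (hα0 k) (h0.1 (k + 1) hk k hk)
    have := mul_nonneg (hα0 k) (mul_nonneg (hα0 k) (hnn 1 (p k)))
    linarith
  · have e : r k = r (k + 1) + α k • T (p k) := by rw [hr]; abel
    rw [e]
    simp only [map_add, map_smul, LinearMap.add_apply, LinearMap.smul_apply, smul_eq_mul]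
    rw [hs 0 (r (k + 1)) (T (p k)), hT 0 (p k) (r (k + 1)), hs _ (p k)]
    have := mul_nonneg (hα0 k) (h1.1 (k + 1) hk k hk)
    have := mul_nonneg (hα0 k) (mul_nonneg (hα0 k) (hnn 0 (T (p k))))
    simp only [zero_add] at *
    linarith

/-- Paper: Theorem 6.4 (last two items).  For the cAr (equivalently MinAres) iteration on
an SPD system `A x = b` with exact solution `x* = A⁻¹ b`, the energy-norm errors
`‖x* − x_k‖_A` (i.e. `(x* − x_k)ᵀ A (x* − x_k)`) decrease monotonically and the residual
norms `‖r_k‖` decrease monotonically. -/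
theorem car_energy_and_residual_norms_monotone (n ℓ : ℕ) (hℓn : ℓ ≤ n)
    (A : Matrix (Fin n) (Fin n) ℝ) (hA : A.PosDef) (b : EuclideanSpace ℝ (Fin n))
    (x r p : ℕ → EuclideanSpace ℝ (Fin n)) (ρ α β : ℕ → ℝ)
    (xstar : EuclideanSpace ℝ (Fin n)) (hxstar : xstar = A⁻¹.mulVec b)
    (hx0 : x 0 = 0) (hr0 : r 0 = b) (hp0 : p 0 = b)
    (hρ : ∀ k, ρ k = r k ⬝ᵥ (A ^ 3).mulVec (r k))
    (hα : ∀ k, α k = ρ k / ((A ^ 2).mulVec (p k) ⬝ᵥ (A ^ 2).mulVec (p k)))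
    (hx : ∀ k, x (k + 1) = x k + α k • p k)
    (hr : ∀ k, r (k + 1)
            = r k - α k • (EuclideanSpace.equiv (Fin n) ℝ).symm (A.mulVec (p k)))
    (hβ : ∀ k, β k = ρ (k + 1) / ρ k)
    (hp : ∀ k, p (k + 1) = r (k + 1) + β k • p k)
    (hne : ∀ k < ℓ, r k ≠ 0) (hfin : r ℓ = 0) :
    ∀ k, 1 ≤ k → k ≤ ℓ →
      (xstar - x k) ⬝ᵥ A.mulVec (xstar - x k)
          ≤ (xstar - x (k - 1)) ⬝ᵥ A.mulVec (xstar - x (k - 1)) ∧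
      ‖r k‖ ≤ ‖r (k - 1)‖ := by
  intro k hk1 hkl
  obtain ⟨k, rfl⟩ : ∃ m, k = m + 1 := ⟨k - 1, by omega⟩
  have hdet : IsUnit A.det := isUnit_iff_ne_zero.mpr hA.det_pos.ne'
  have hAs : Aᵀ = A := by simpa using hA.isHermitian.eq
  have hB : ∀ m (u v : Fin n → ℝ), Matrix.toBilin' (A ^ m) u v = u ⬝ᵥ (A ^ m) *ᵥ v :=
    fun m u v => Matrix.toBilin'_apply' _ _ _
  have hsw : ∀ m (u v : Fin n → ℝ), ((A ^ m) *ᵥ u) ⬝ᵥ v = u ⬝ᵥ (A ^ m) *ᵥ v := by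
    intro m u v
    rw [Matrix.dotProduct_mulVec, ← Matrix.mulVec_transpose, Matrix.transpose_pow, hAs]
  have hpd : ∀ m, (A ^ m).PosDef := fun m =>
    (hA.posSemidef.pow m).posDef_iff_isUnit.mpr (hA.isUnit.pow m)
  have main := car_signs (V := Fin n → ℝ) A.mulVecLin (fun m => Matrix.toBilin' (A ^ m))
    (by
      intro m u v
      have := hsw 1 u ((A ^ m) *ᵥ v)
      rw [pow_one] at this
      rw [hB, hB, Matrix.mulVecLin_apply, this, Matrix.mulVec_mulVec, pow_succ'])
    (by
      intro m u v
      rw [hB, hB, ← hsw, dotProduct_comm])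
    (by
      intro m u hu
      rw [hB]
      simpa using (hpd m).dotProduct_mulVec_pos hu)
    ℓ (fun k => x k) (fun k => r k) (fun k => p k) ρ α β xstar
    (by simp [hp0, hr0])
    (by
      simp only [hxstar, hx0, hr0, Matrix.mulVecLin_apply]
      simp [Matrix.mulVec_mulVec, Matrix.mul_nonsing_inv _ hdet])
    (by intro k; rw [hB, hρ])
    (by
      intro k
      rw [hB, hα, hsw, Matrix.mulVec_mulVec, ← pow_add])
    (by intro k; simp [hx])
    (by intro k; rw [hr]; rfl)
    hβ (by intro k; simp [hp])
    (by
      intro k hk h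
      apply hne k hk
      ext i
      exact congrFun h i)
    (by simp [hfin]) k (by omega)
  beta_reduce at main
  rw [hB, hB, hB, hB] at main
  simp only [pow_one, pow_zero, Matrix.one_mulVec] at main
  simp only [Nat.add_sub_cancel]
  refine ⟨main.1, ?_⟩
  have hn : ∀ v : EuclideanSpace ℝ (Fin n), ‖v‖ ^ 2 = (v : Fin n → ℝ) ⬝ᵥ v := by
    intro v
    rw [EuclideanSpace.real_norm_sq_eq]
    simp [dotProduct, pow_two]
  have h2 := main.2
  rw [← hn, ← hn] at h2
  exact (pow_le_pow_iff_left₀ (norm_nonneg _) (norm_nonneg _) two_ne_zero).mp h2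
end
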